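/- arXiv:2510.01466 — 5 statements merged into one kernel-verified Lean document; each statement's English description precedes it below -/
import Mathlib

section
/- Fix integers t ≥ 1 and Δ ≥ 3 and let r = 2·vol(Δ, 2t) where vol(Δ, t) = 1 + Δ·((Δ−1)^t − 1)/(Δ−2). Let G = (V,E) be a finite S_{t,t,t}-free simple graph of maximum degree at most Δ, let λ = (λ_v)_{v∈V} be complex weights such that Π_{v∈S} λ_v ∈ R(2^{Δr}) for every subset S ⊆ V with |S| ≤ r, let u ∈ V be a root vertex, and let (L,U) be an admissible pair with respect to (G,u). Then: (i) Z(U) ≠ 0 and Z(U ∖ ∂L) ≠ 0; and (ii) Z(U) / Z(U ∖ ∂L) ∈ H(1/2). In particular, taking the admissible pair (∅, V), Z_{G,λ} ≠ 0. -/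
attribute [local instance] Classical.propDecidable

/-- Multivariate independence polynomial of the induced subgraph `G[W]`:
the sum over all independent sets `S ⊆ W` of `∏ v ∈ S, lam v`. -/
noncomputable def indepPolyOn {V : Type*} [Fintype V] (G : SimpleGraph V)
    (lam : V → ℂ) (W : Finset V) : ℂ :=
  ∑ S ∈ W.powerset, if (∀ u ∈ S, ∀ v ∈ S, ¬ G.Adj u v) then ∏ v ∈ S, lam v else 0

/-- Multivariate independence polynomial `Z_{G,λ}`. -/
noncomputable def indepPoly {V : Type*} [Fintype V] (G : SimpleGraph V)
    (lam : V → ℂ) : ℂ :=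
  indepPolyOn G lam Finset.univ

/-- The subdivided claw `S_{t,t,t}`: three paths of length `t` sharing one common
endpoint (the vertex `none`). -/
def subdividedClaw (t : ℕ) : SimpleGraph (Option (Fin 3 × Fin t)) :=
  SimpleGraph.fromRel (fun a b =>
    match a, b with
    | none, some (_, j) => (j : ℕ) = 0
    | some (i, j), some (i', j') => i = i' ∧ (j : ℕ) + 1 = (j' : ℕ)
    | _, _ => False)

/-- The open parabolic region `R(k) = {z : (Im z)² < (1/k)·Re z + 1/(4k²)}`. -/
def parabR (k : ℝ) : Set ℂ := {z : ℂ | z.im ^ 2 < z.re / k + 1 / (4 * k ^ 2)}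

/-- The closed halfplane `H(t) = {z : Re z ≥ t}`. -/
def halfH (t : ℝ) : Set ℂ := {z : ℂ | t ≤ z.re}


/-- The boundary `∂X` of a set of vertices: the vertices outside `X` that have a
neighbour in `X`, with the special convention `∂∅ = {u}` for the root `u`. -/
noncomputable def bdry {V : Type*} [Fintype V] (G : SimpleGraph V) (u : V)
    (X : Finset V) : Finset V :=
  if X = ∅ then {u}
  else Finset.univ.filter (fun v => v ∉ X ∧ ∃ x ∈ X, G.Adj v x)

/-- Admissible pairs `(L, U)` with respect to a graph `G` and root vertex `u`. -/
inductive Admissible {V : Type*} [Fintype V] (G : SimpleGraph V) (u : V) :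
    Finset V → Finset V → Prop
  | base : Admissible G u ∅ Finset.univ
  | root : Admissible G u {u} (Finset.univ \ {u})
  | step (L' U' L : Finset V) :
      Admissible G u L' U' →
      L.Nonempty →
      L ⊆ bdry G u L' ∩ U' →
      (∀ a ∈ L, ∀ b ∈ L, ¬ G.Adj a b) →
      Admissible G u L (U' \ bdry G u L')

/-- `vol(Δ, t) = 1 + Δ·((Δ−1)^t − 1)/(Δ−2)`. -/
noncomputable def vol (Δ t : ℕ) : ℝ :=
  1 + (Δ : ℝ) * (((Δ : ℝ) - 1) ^ t - 1) / ((Δ : ℝ) - 2)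

/-! ### Combinatorial part -/

/-- Induced paths, as lists of vertices. -/
def IndP {V : Type*} (G : SimpleGraph V) : List V → Prop
  | [] => True
  | x :: l => x ∉ l ∧ (∀ y ∈ l.head?, G.Adj x y) ∧ (∀ z ∈ l.tail, ¬ G.Adj x z) ∧ IndP G l

/-- Two lists of vertices are disjoint with no edges between them. -/
def SepP {V : Type*} (G : SimpleGraph V) (A B : List V) : Prop :=
  ∀ a ∈ A, ∀ b ∈ B, a ≠ b ∧ ¬ G.Adj a b

theorem SepP.symm {V : Type*} {G : SimpleGraph V} {A B : List V} (h : SepP G A B) :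
    SepP G B A := fun b hb a ha => ⟨(h a ha b hb).1.symm, fun k => (h a ha b hb).2 k.symm⟩

/-- Plain vertex boundary. -/
noncomputable def nbd {V : Type*} [Fintype V] (G : SimpleGraph V) (X : Finset V) : Finset V :=
  Finset.univ.filter (fun v => v ∉ X ∧ ∃ x ∈ X, G.Adj v x)

theorem mem_nbd {V : Type*} [Fintype V] {G : SimpleGraph V} {X : Finset V} {v : V} :
    v ∈ nbd G X ↔ v ∉ X ∧ ∃ x ∈ X, G.Adj v x := by simp [nbd]

/-- Admissible pairs with nonempty first entry, over an arbitrary starting set. -/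
inductive Adm2 {V : Type*} [Fintype V] (G : SimpleGraph V) : Finset V → Finset V → Prop
  | root (u : V) (U : Finset V) : u ∉ U → Adm2 G {u} U
  | step (L' U' L : Finset V) :
      Adm2 G L' U' →
      L.Nonempty →
      L ⊆ nbd G L' ∩ U' →
      (∀ a ∈ L, ∀ b ∈ L, ¬ G.Adj a b) →
      Adm2 G L (U' \ nbd G L')

theorem Adm2.indep {V : Type*} [Fintype V] {G : SimpleGraph V} {L U : Finset V}
    (h : Adm2 G L U) : ∀ a ∈ L, ∀ b ∈ L, ¬ G.Adj a b := by
  cases h with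
  | root u U h => simp
  | step L' U' L h1 h2 h3 h4 => exact h4

theorem Adm2.notMem {V : Type*} [Fintype V] {G : SimpleGraph V} {L U : Finset V}
    (h : Adm2 G L U) : ∀ a ∈ L, a ∉ U := by
  cases h with
  | root u U h => simpa using h
  | step L' U' L h1 h2 h3 h4 =>
    intro a ha hb
    have := h3 ha
    simp at this hb
    exact hb.2 this.1

theorem Adm2.nonempty {V : Type*} [Fintype V] {G : SimpleGraph V} {L U : Finset V}
    (h : Adm2 G L U) : L.Nonempty := by
  cases h with
  | root u U h => simp
  | step L' U' L h1 h2 h3 h4 => exact h2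

theorem Adm2.dead {V : Type*} [Fintype V] {G : SimpleGraph V} {L U : Finset V}
    (h : Adm2 G L U) : ∀ m ∈ L, ∀ x ∈ U \ nbd G L, m ≠ x ∧ ¬ G.Adj m x := by
  intro m hm x hx
  rw [Finset.mem_sdiff, mem_nbd] at hx
  have := h.notMem
  refine ⟨by rintro rfl; exact this _ hm hx.1, fun hadj => hx.2 ⟨fun hxL => this _ hxL hx.1, m, hm, hadj.symm⟩⟩

theorem Adm2.pathP {V : Type*} [Fintype V] {G : SimpleGraph V} {L U : Finset V}
    (h : Adm2 G L U) : ∀ p q l, p ∈ L → q ∈ L → p ≠ q → (∀ x ∈ l, x ∈ U) → IndP G (q :: l) →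
      (∀ x ∈ l, ¬ G.Adj p x) →
      ∃ l' : List V, l' ≠ [] ∧ (∀ x ∈ l', x ∉ U ∧ ∀ y ∈ U, ¬ G.Adj x y) ∧
        IndP G (p :: (l' ++ q :: l)) := by
  induction h with
  | root u U hu =>
    intro p q l hp hq hpq
    simp at hp hq
    exact absurd (hp.trans hq.symm) hpq
  | step L' U' L h1 h2 h3 h4 ih =>
    intro p q l hp hq hpq hl hI hpl
    have hdead := h1.dead
    have hnot := h1.notMem
    have hpL := h3 hp
    have hqL := h3 hq
    rw [Finset.mem_inter, mem_nbd] at hpL hqL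
    obtain ⟨⟨_, p', hp', hpp'⟩, hpU⟩ := hpL
    obtain ⟨⟨_, q', hq', hqq'⟩, hqU⟩ := hqL
    have hnotL : ∀ x ∈ L, x ∉ U' \ nbd G L' := (Adm2.step L' U' L h1 h2 h3 h4).notMem
    by_cases hc : ∃ m ∈ L', G.Adj m p ∧ G.Adj m q
    · obtain ⟨m, hm, hmp, hmq⟩ := hc
      refine ⟨[m], by simp, ?_, ?_⟩
      · intro x hx
        simp at hx
        subst hx
        exact ⟨fun hxx => (hdead _ hm _ hxx).1 rfl, fun y hy => (hdead _ hm _ hy).2⟩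
      · have e1 : p ≠ m := by rintro rfl; exact hnot _ hm hpU
        have e2 : m ≠ q := by rintro rfl; exact hnot _ hm hqU
        have e3 : p ∉ l := fun hh => hnotL _ hp (hl _ hh)
        have e4 : m ∉ l := fun hh => (hdead _ hm _ (hl _ hh)).1 rfl
        refine ⟨by simp [e1, hpq, e3], by simpa using hmp.symm, ?_, ?_⟩
        · intro z hz
          simp at hz
          rcases hz with rfl | hz
          · exact h4 _ hp _ hq
          · exact hpl _ hz
        · refine ⟨by simp [e2, e4], by simpa using hmq, ?_, hI⟩
          intro z hz
          exact (hdead _ hm _ (hl _ hz)).2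
    · push Not at hc
      have hne : p' ≠ q' := by
        rintro rfl
        exact hc _ hp' hpp'.symm hqq'.symm
      have hlU : ∀ x ∈ l, x ∈ U' := fun x hx => (Finset.mem_sdiff.1 (hl x hx)).1
      obtain ⟨l'', hl1, hl2, hl3⟩ := ih p' q' (q :: l) hp' hq' hne
        (by intro x hx; simp at hx; rcases hx with rfl | hx; exacts [hqU, hlU _ hx])
        ⟨by
          simp only [List.mem_cons, not_or]
          exact ⟨by rintro rfl; exact hnot _ hq' hqU, fun hh => hnot _ hq' (hlU _ hh)⟩,
          by simpa using hqq'.symm, fun z hz => (hdead _ hq' _ (hl _ hz)).2, hI⟩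
        (by
          intro x hx; simp at hx; rcases hx with rfl | hx
          · exact hc _ hp' hpp'.symm
          · exact (hdead _ hp' _ (hl _ hx)).2)
      refine ⟨p' :: (l'' ++ [q']), by simp, ?_, ?_⟩
      · intro x hx
        simp at hx
        rcases hx with rfl | hx | rfl
        · exact ⟨fun hxx => (hdead _ hp' _ hxx).1 rfl, fun y hy => (hdead _ hp' _ hy).2⟩
        · exact ⟨fun hxx => (hl2 _ hx).1 (Finset.mem_sdiff.1 hxx).1,
            fun y hy => (hl2 _ hx).2 _ (Finset.mem_sdiff.1 hy).1⟩
        · exact ⟨fun hxx => (hdead _ hq' _ hxx).1 rfl, fun y hy => (hdead _ hq' _ hy).2⟩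
      · have e : p' :: (l'' ++ [q']) ++ q :: l = p' :: (l'' ++ q' :: q :: l) := by simp
        rw [e]
        refine ⟨?_, by simpa using hpp', ?_, hl3⟩
        · simp only [List.mem_cons, List.mem_append, not_or]
          refine ⟨?_, ?_, ?_, hpq, fun hh => hnotL _ hp (hl _ hh)⟩
          · rintro rfl; exact hnot _ hp' hpU
          · intro hh; exact (hl2 _ hh).1 hpU
          · rintro rfl; exact hnot _ hq' hpU
        · intro z hz
          simp at hz
          rcases hz with hz | rfl | rfl | hz
          · exact fun hh => (hl2 _ hz).2 _ hpU hh.symm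
          · exact fun hh => hc _ hq' hh.symm hqq'.symm
          · exact h4 _ hp _ hq
          · exact hpl _ hz

theorem IndP.get {V : Type*} {G : SimpleGraph V} : ∀ {l : List V}, IndP G l →
    ∀ i j (hi : i < l.length) (hj : j < l.length), i < j →
      l[i] ≠ l[j] ∧ (G.Adj l[i] l[j] ↔ j = i + 1)
  | [], _, i, j, hi, _, _ => by simp at hi
  | x :: l, h, i, j, hi, hj, hij => by
    obtain ⟨h1, h2, h3, h4⟩ := h
    obtain ⟨j, rfl⟩ : ∃ j', j = j' + 1 := ⟨j - 1, by omega⟩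
    cases i with
    | zero =>
      simp only [List.getElem_cons_zero, List.getElem_cons_succ]
      simp at hj
      refine ⟨fun e => h1 (e ▸ List.getElem_mem _), ?_⟩
      cases j with
      | zero =>
        simp
        apply h2
        cases l with
        | nil => simp at hj
        | cons y l => simp
      | succ j =>
        simp
        apply h3
        cases l with
        | nil => simp at hj
        | cons y l => simp
    | succ i =>
      simp only [List.getElem_cons_succ]
      simp at hi hj
      have := IndP.get h4 i j hi hj (by omega)
      simpa using this

theorem claw_of_arms {V : Type*} {G : SimpleGraph V} (t : ℕ) (v : V) (l : Fin 3 → List V)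
    (hlen : ∀ i, t ≤ (l i).length) (hI : ∀ i, IndP G (v :: l i))
    (hS : ∀ i j, i ≠ j → SepP G (l i) (l j)) : Nonempty (subdividedClaw t ↪g G) := by
  have hlt : ∀ (i : Fin 3) (j : Fin t), (j : ℕ) < (l i).length :=
    fun i j => lt_of_lt_of_le j.2 (hlen i)
  let f : Option (Fin 3 × Fin t) → V := fun o => match o with
    | none => v
    | some (i, j) => (l i)[(j : ℕ)]'(hlt i j)
  have hnone : ∀ (i : Fin 3) (j : Fin t), f none ≠ f (some (i, j)) ∧
      (G.Adj (f none) (f (some (i, j))) ↔ (j : ℕ) = 0) := by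
    intro i j
    have := (hI i).get 0 (j + 1) (by simp) (by simp; exact hlt i j) (by omega)
    simpa [f] using this
  have hsame : ∀ (i : Fin 3) (j j' : Fin t), j < j' → f (some (i, j)) ≠ f (some (i, j')) ∧
      (G.Adj (f (some (i, j))) (f (some (i, j'))) ↔ (j' : ℕ) = j + 1) := by
    intro i j j' hjj
    have := (hI i).get (j + 1) (j' + 1) (by simp; exact hlt i j) (by simp; exact hlt i j')
      (by simpa using hjj)
    simpa [f] using this
  have hdiff : ∀ (i i' : Fin 3) (j j' : Fin t), i ≠ i' → f (some (i, j)) ≠ f (some (i', j')) ∧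
      ¬ G.Adj (f (some (i, j))) (f (some (i', j'))) := by
    intro i i' j j' hii
    exact hS i i' hii _ (List.getElem_mem _) _ (List.getElem_mem _)
  have hinj : Function.Injective f := by
    intro a b hab
    rcases a with _ | ⟨i, j⟩ <;> rcases b with _ | ⟨i', j'⟩
    · rfl
    · exact absurd hab (hnone _ _).1
    · exact absurd hab.symm (hnone _ _).1
    · by_cases hii : i = i'
      · subst hii
        rcases lt_trichotomy j j' with h | h | h
        · exact absurd hab (hsame _ _ _ h).1
        · rw [h]
        · exact absurd hab.symm (hsame _ _ _ h).1
      · exact absurd hab (hdiff _ _ _ _ hii).1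
  refine ⟨⟨⟨f, hinj⟩, ?_⟩⟩
  intro a b
  simp only [Function.Embedding.coeFn_mk, subdividedClaw, SimpleGraph.fromRel_adj]
  rcases a with _ | ⟨i, j⟩ <;> rcases b with _ | ⟨i', j'⟩
  · simp
  · simp [(hnone i' j').2]
  · rw [G.adj_comm]
    simp [(hnone i j).2]
  · by_cases hii : i = i'
    · subst hii
      rcases lt_trichotomy j j' with h | h | h
      · rw [(hsame i j j' h).2]
        have : (j : ℕ) < j' := h
        simp [Fin.ext_iff]
        omega
      · subst h; simp
      · rw [G.adj_comm, (hsame i j' j h).2]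
        have : (j' : ℕ) < j := h
        simp [Fin.ext_iff]
        omega
    · simp [(hdiff i i' j j' hii).2, hii, Ne.symm hii]

theorem claw_of_arms3 {V : Type*} {G : SimpleGraph V} (t : ℕ) (v : V) (A B C : List V)
    (hA : t ≤ A.length) (hB : t ≤ B.length) (hC : t ≤ C.length)
    (iA : IndP G (v :: A)) (iB : IndP G (v :: B)) (iC : IndP G (v :: C))
    (sAB : SepP G A B) (sAC : SepP G A C) (sBC : SepP G B C) :
    Nonempty (subdividedClaw t ↪g G) := by
  refine claw_of_arms t v ![A, B, C] ?_ ?_ ?_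
  · intro i; fin_cases i <;> simpa
  · intro i; fin_cases i <;> simpa
  · intro i j hij
    fin_cases i <;> fin_cases j <;> first | exact absurd rfl hij | skip
    · exact sAB
    · exact sAC
    · exact sAB.symm
    · exact sBC
    · exact sAC.symm
    · exact sBC.symm

theorem SepP.cons_left {V : Type*} {G : SimpleGraph V} {x : V} {A B : List V}
    (h1 : ∀ b ∈ B, x ≠ b ∧ ¬ G.Adj x b) (h2 : SepP G A B) : SepP G (x :: A) B := by
  intro a ha b hb
  simp at ha
  rcases ha with rfl | ha
  · exact h1 b hb
  · exact h2 a ha b hb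

theorem SepP.cons_right {V : Type*} {G : SimpleGraph V} {x : V} {A B : List V}
    (h1 : ∀ b ∈ A, x ≠ b ∧ ¬ G.Adj x b) (h2 : SepP G A B) : SepP G A (x :: B) :=
  (SepP.cons_left h1 h2.symm).symm

/-- An arm with a vertex of the lower layer put in front. -/
theorem IndP.cons_low {V : Type*} {G : SimpleGraph V} {m a : V} {A : List V}
    (hA : ∀ x ∈ A, m ≠ x ∧ ¬ G.Adj m x) (hma : G.Adj m a) (h : IndP G (a :: A)) :
    IndP G (m :: a :: A) := by
  refine ⟨?_, by simpa using hma, fun z hz => (hA z hz).2, h⟩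
  simp only [List.mem_cons, not_or]
  exact ⟨hma.ne, fun hh => (hA _ hh).1 rfl⟩

/-- `m` is adjacent to `a, c` but not to `b`. -/
theorem merge_two {V : Type*} [Fintype V] {G : SimpleGraph V} (t : ℕ) {L U : Finset V}
    (h : Adm2 G L U) (a b c : V) (A B C : List V)
    (ha : a ∈ U) (hb : b ∈ U) (hc : c ∈ U)
    (hA : ∀ x ∈ A, x ∈ U \ nbd G L) (hB : ∀ x ∈ B, x ∈ U \ nbd G L)
    (hC : ∀ x ∈ C, x ∈ U \ nbd G L)
    (iA : IndP G (a :: A)) (iB : IndP G (b :: B)) (iC : IndP G (c :: C))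
    (sAB : SepP G (a :: A) (b :: B)) (sAC : SepP G (a :: A) (c :: C))
    (sBC : SepP G (b :: B) (c :: C))
    (lA : t ≤ A.length) (lB : t ≤ B.length) (lC : t ≤ C.length)
    (hall : ∀ m ∈ L, ¬ (G.Adj m a ∧ G.Adj m b ∧ G.Adj m c))
    (m q : V) (hm : m ∈ L) (hma : G.Adj m a) (hmc : G.Adj m c)
    (hq : q ∈ L) (hqb : G.Adj q b) : Nonempty (subdividedClaw t ↪g G) := by
  have hdead := h.dead
  have hnot := h.notMem
  have hmb : ¬ G.Adj m b := fun hh => hall m hm ⟨hma, hh, hmc⟩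
  have hmq : m ≠ q := by rintro rfl; exact hmb hqb
  have hmq' : ¬ G.Adj m q := h.indep _ hm _ hq
  have low : ∀ m ∈ L, ∀ A : List V, (∀ x ∈ A, x ∈ U \ nbd G L) →
      ∀ x ∈ A, m ≠ x ∧ ¬ G.Adj m x := fun m hm A hA x hx => hdead m hm x (hA x hx)
  have lowc : ∀ m ∈ L, ∀ a ∈ U, ¬ G.Adj m a → ∀ A : List V, (∀ x ∈ A, x ∈ U \ nbd G L) →
      ∀ x ∈ a :: A, m ≠ x ∧ ¬ G.Adj m x := by
    intro m hm a ha hma A hA x hx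
    simp at hx
    rcases hx with rfl | hx
    · exact ⟨by rintro rfl; exact hnot _ hm ha, hma⟩
    · exact low m hm A hA x hx
  have tl : ∀ {x : V} {A B : List V}, SepP G (x :: A) B → SepP G A B :=
    fun hh a ha => hh a (List.mem_cons_of_mem _ ha)
  have mqB : SepP G [m] (q :: b :: B) := by
    intro x hx y hy
    simp only [List.mem_singleton] at hx
    subst hx
    simp only [List.mem_cons] at hy
    rcases hy with rfl | hy
    · exact ⟨hmq, hmq'⟩
    · exact lowc _ hm b hb hmb B hB y (by simpa using hy)
  by_cases hqa : G.Adj q a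
  · -- centre a
    have hqc : ¬ G.Adj q c := fun hh => hall q hq ⟨hqa, hqb, hh⟩
    refine claw_of_arms3 t a A (m :: c :: C) (q :: b :: B) lA (by simp; omega) (by simp; omega)
      iA ?_ ?_ ?_ ?_ ?_
    · refine IndP.cons_low ?_ hma.symm (IndP.cons_low (low m hm C hC) hmc iC)
      intro x hx
      exact sAC a (by simp) x hx
    · refine IndP.cons_low ?_ hqa.symm (IndP.cons_low (low q hq B hB) hqb iB)
      intro x hx
      exact sAB a (by simp) x hx
    · exact SepP.cons_right (low m hm A hA) (tl sAC)
    · exact SepP.cons_right (low q hq A hA) (tl sAB)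
    · exact SepP.cons_left (fun y hy => mqB m (by simp) y hy)
        (SepP.cons_right (lowc q hq c hc hqc C hC) sBC.symm)
  by_cases hqc : G.Adj q c
  · refine claw_of_arms3 t c C (m :: a :: A) (q :: b :: B) lC (by simp; omega) (by simp; omega)
      iC ?_ ?_ ?_ ?_ ?_
    · refine IndP.cons_low ?_ hmc.symm (IndP.cons_low (low m hm A hA) hma iA)
      intro x hx
      exact sAC.symm c (by simp) x hx
    · refine IndP.cons_low ?_ hqc.symm (IndP.cons_low (low q hq B hB) hqb iB)
      intro x hx
      exact sBC.symm c (by simp) x hx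
    · exact SepP.cons_right (low m hm C hC) (tl sAC.symm)
    · exact SepP.cons_right (low q hq C hC) (tl sBC.symm)
    · exact SepP.cons_left (fun y hy => mqB m (by simp) y hy)
        (SepP.cons_right (lowc q hq a ha hqa A hA) sAB)
  -- centre m
  obtain ⟨l', _, hl2, hl3⟩ := h.pathP m q (b :: B) hm hq hmq
    (by
      intro x hx; simp at hx; rcases hx with rfl | hx
      · exact hb
      · exact (Finset.mem_sdiff.1 (hB x hx)).1)
    (IndP.cons_low (low q hq B hB) hqb iB)
    (fun x hx => (lowc m hm b hb hmb B hB x hx).2)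
  have key : ∀ a ∈ U, ∀ A : List V, (∀ x ∈ A, x ∈ U \ nbd G L) → ¬ G.Adj q a →
      SepP G (a :: A) (b :: B) → SepP G (a :: A) (l' ++ q :: b :: B) := by
    intro a ha A hA hqa hs x hx y hy
    have hxU : x ∈ U := by
      simp at hx
      rcases hx with rfl | hx
      · exact ha
      · exact (Finset.mem_sdiff.1 (hA x hx)).1
    rw [List.mem_append, List.mem_cons] at hy
    rcases hy with hy | rfl | hy
    · exact ⟨by rintro rfl; exact (hl2 _ hy).1 hxU, fun hh => (hl2 _ hy).2 _ hxU hh.symm⟩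
    · have := lowc _ hq a ha hqa A hA x hx
      exact ⟨this.1.symm, fun hh => this.2 hh.symm⟩
    · exact hs x hx y hy
  exact claw_of_arms3 t m (a :: A) (c :: C) (l' ++ q :: b :: B) (by simp; omega)
    (by simp; omega) (by simp; omega) (IndP.cons_low (low m hm A hA) hma iA)
    (IndP.cons_low (low m hm C hC) hmc iC) hl3 sAC (key a ha A hA hqa sAB)
    (key c hc C hC hqc sBC.symm)

theorem three_arms {V : Type*} [Fintype V] {G : SimpleGraph V} (t : ℕ) (x y z : V)
    (hxy : ∀ p : G.Walk x y, 2 * t < p.length) (hxz : ∀ p : G.Walk x z, 2 * t < p.length)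
    (hyz : ∀ p : G.Walk y z, 2 * t < p.length) {L U : Finset V} (h : Adm2 G L U) :
    ∀ (n : ℕ) (a b c : V) (A B C : List V), a ∈ L → b ∈ L → c ∈ L →
    (∀ x ∈ A, x ∈ U) → (∀ x ∈ B, x ∈ U) → (∀ x ∈ C, x ∈ U) →
    IndP G (a :: A) → IndP G (b :: B) → IndP G (c :: C) →
    SepP G (a :: A) (b :: B) → SepP G (a :: A) (c :: C) → SepP G (b :: B) (c :: C) →
    A.length = n → B.length = n → C.length = n →
    (∃ p : G.Walk x a, p.length = n) → (∃ p : G.Walk y b, p.length = n) →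
    (∃ p : G.Walk z c, p.length = n) → Nonempty (subdividedClaw t ↪g G) := by
  induction h with
  | root u U hu =>
    intro n a b c A B C ha hb hc _ _ _ _ _ _ sAB
    simp at ha hb
    exact absurd (ha.trans hb.symm) (sAB a (by simp) b (by simp)).1
  | step L' U' L h1 h2 h3 h4 ih =>
    intro n a b c A B C ha hb hc hA hB hC iA iB iC sAB sAC sBC lA lB lC wx wy wz
    have hdead := h1.dead
    have hnot := h1.notMem
    have low : ∀ m ∈ L', ∀ A : List V, (∀ x ∈ A, x ∈ U' \ nbd G L') →
        ∀ x ∈ A, m ≠ x ∧ ¬ G.Adj m x := fun m hm A hA x hx => hdead m hm x (hA x hx)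
    have ha' := h3 ha
    have hb' := h3 hb
    have hc' := h3 hc
    rw [Finset.mem_inter, mem_nbd] at ha' hb' hc'
    obtain ⟨⟨_, p, hp, hpa⟩, haU⟩ := ha'
    obtain ⟨⟨_, q, hq, hqb⟩, hbU⟩ := hb'
    obtain ⟨⟨_, s, hs, hsc⟩, hcU⟩ := hc'
    have walkM : ∀ {x y a b m : V}, (∃ p : G.Walk x a, p.length = n) →
        (∃ p : G.Walk y b, p.length = n) → (∀ p : G.Walk x y, 2 * t < p.length) →
        G.Adj m a → G.Adj m b → t ≤ n := by
      rintro x y a b m ⟨p, hp⟩ ⟨q, hq⟩ hf hma hmb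
      have := hf (p.append (SimpleGraph.Walk.cons hma.symm
        (SimpleGraph.Walk.cons hmb q.reverse)))
      simp [hp, hq] at this
      omega
    by_cases hall : ∃ m ∈ L', G.Adj m a ∧ G.Adj m b ∧ G.Adj m c
    · obtain ⟨m, hm, hma, hmb, hmc⟩ := hall
      have htn : t ≤ n := walkM wx wy hxy hma hmb
      exact claw_of_arms3 t m (a :: A) (b :: B) (c :: C) (by simp; omega) (by simp; omega)
        (by simp; omega) (IndP.cons_low (low m hm A hA) hma iA)
        (IndP.cons_low (low m hm B hB) hmb iB) (IndP.cons_low (low m hm C hC) hmc iC) sAB sAC sBC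
    have hall' : ∀ m ∈ L', ¬ (G.Adj m a ∧ G.Adj m b ∧ G.Adj m c) :=
      fun m hm hh => hall ⟨m, hm, hh⟩
    by_cases hac : ∃ m ∈ L', G.Adj m a ∧ G.Adj m c
    · obtain ⟨m, hm, hma, hmc⟩ := hac
      have htn : t ≤ n := walkM wx wz hxz hma hmc
      exact merge_two t h1 a b c A B C haU hbU hcU hA hB hC iA iB iC sAB sAC sBC
        (by omega) (by omega) (by omega) hall' m q hm hma hmc hq hqb.symm
    by_cases hab : ∃ m ∈ L', G.Adj m a ∧ G.Adj m b
    · obtain ⟨m, hm, hma, hmb⟩ := hab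
      have htn : t ≤ n := walkM wx wy hxy hma hmb
      exact merge_two t h1 a c b A C B haU hcU hbU hA hC hB iA iC iB sAC sAB sBC.symm
        (by omega) (by omega) (by omega)
        (fun m hm hh => hall' m hm ⟨hh.1, hh.2.2, hh.2.1⟩) m s hm hma hmb hs hsc.symm
    by_cases hbc : ∃ m ∈ L', G.Adj m b ∧ G.Adj m c
    · obtain ⟨m, hm, hmb, hmc⟩ := hbc
      have htn : t ≤ n := walkM wy wz hyz hmb hmc
      exact merge_two t h1 b a c B A C hbU haU hcU hB hA hC iB iA iC sAB.symm sBC sAC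
        (by omega) (by omega) (by omega)
        (fun m hm hh => hall' m hm ⟨hh.2.1, hh.1, hh.2.2⟩) m p hm hmb hmc hp hpa.symm
    push Not at hac hab hbc
    have lowc : ∀ m ∈ L', ∀ a ∈ U', ¬ G.Adj m a → ∀ A : List V, (∀ x ∈ A, x ∈ U' \ nbd G L') →
        ∀ x ∈ a :: A, m ≠ x ∧ ¬ G.Adj m x := by
      intro m hm a ha hma A hA x hx
      simp at hx
      rcases hx with rfl | hx
      · exact ⟨by rintro rfl; exact hnot _ hm ha, hma⟩
      · exact low m hm A hA x hx
    have inU : ∀ a ∈ U', ∀ A : List V, (∀ x ∈ A, x ∈ U' \ nbd G L') → ∀ x ∈ a :: A, x ∈ U' := by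
      intro a ha A hA x hx
      simp at hx
      rcases hx with rfl | hx
      · exact ha
      · exact (Finset.mem_sdiff.1 (hA x hx)).1
    have sepN : ∀ (a b p q : V) (A B : List V), a ∈ U' → b ∈ U' → p ∈ L' → q ∈ L' →
        (∀ x ∈ A, x ∈ U' \ nbd G L') → (∀ x ∈ B, x ∈ U' \ nbd G L') →
        G.Adj a p → G.Adj b q → (∀ m ∈ L', G.Adj m a → ¬ G.Adj m b) →
        SepP G (a :: A) (b :: B) → SepP G (p :: a :: A) (q :: b :: B) := by
      intro a b p q A B ha hb hp hq hA hB hap hbq hno hs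
      have hqa : ¬ G.Adj q a := fun hh => hno q hq hh hbq.symm
      have hpb : ¬ G.Adj p b := hno p hp hap.symm
      have hpq : p ≠ q := by rintro rfl; exact hqa hap.symm
      refine SepP.cons_left ?_ (SepP.cons_right (lowc q hq a ha hqa A hA) hs)
      intro y hy
      rw [List.mem_cons] at hy
      rcases hy with rfl | hy
      · exact ⟨hpq, h1.indep _ hp _ hq⟩
      · exact lowc p hp b hb hpb B hB y hy
    have wext : ∀ {x a p : V}, (∃ w : G.Walk x a, w.length = n) → G.Adj a p →
        ∃ w : G.Walk x p, w.length = n + 1 := by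
      rintro x a p ⟨w, hw⟩ hap
      exact ⟨w.concat hap, by simp [hw]⟩
    exact ih (n + 1) p q s (a :: A) (b :: B) (c :: C) hp hq hs (inU a haU A hA) (inU b hbU B hB)
      (inU c hcU C hC) (IndP.cons_low (low p hp A hA) hpa.symm iA)
      (IndP.cons_low (low q hq B hB) hqb.symm iB) (IndP.cons_low (low s hs C hC) hsc.symm iC)
      (sepN a b p q A B haU hbU hp hq hA hB hpa hqb hab sAB)
      (sepN a c p s A C haU hcU hp hs hA hC hpa hsc hac sAC)
      (sepN b c q s B C hbU hcU hq hs hB hC hqb hsc hbc sBC)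
      (by simp [lA]) (by simp [lB]) (by simp [lC]) (wext wx hpa) (wext wy hqb) (wext wz hsc)

/-! ### Balls -/

/-- Ball of radius `n` around `x`. -/
noncomputable def ballF {V : Type*} [Fintype V] (G : SimpleGraph V) (x : V) : ℕ → Finset V
  | 0 => {x}
  | n + 1 => ballF G x n ∪ Finset.univ.filter (fun v => ∃ w ∈ ballF G x n, G.Adj w v)

theorem ballF_mono {V : Type*} [Fintype V] {G : SimpleGraph V} {x : V} :
    Monotone (ballF G x) :=
  monotone_nat_of_le_succ (fun n => by rw [ballF]; exact Finset.subset_union_left)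

theorem walk_ballF {V : Type*} [Fintype V] {G : SimpleGraph V} {x : V} :
    ∀ (n : ℕ) (y : V) (p : G.Walk x y), p.length = n → y ∈ ballF G x n := by
  intro n
  induction n with
  | zero =>
    intro y p hp
    have := SimpleGraph.Walk.eq_of_length_eq_zero hp
    simp [ballF, this]
  | succ n ih =>
    intro y p hp
    have hnn : ¬ p.Nil := by
      intro hh
      rw [← SimpleGraph.Walk.length_eq_zero_iff] at hh
      omega
    have h1 := ih _ p.dropLast (by simp [hp])
    rw [ballF, Finset.mem_union]
    right
    simp only [Finset.mem_filter, Finset.mem_univ, true_and]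
    exact ⟨_, h1, p.adj_penultimate hnn⟩

theorem sphere_bound {V : Type*} [Fintype V] {G : SimpleGraph V} (Δ : ℕ)
    (hdeg : ∀ v : V, (G.neighborSet v).ncard ≤ Δ) (x : V) (n : ℕ) :
    (ballF G x (n + 1) \ ballF G x n).card ≤ Δ * (Δ - 1) ^ n := by
  have hd : ∀ v, (Finset.univ.filter (fun w => G.Adj v w)).card ≤ Δ := by
    intro v
    refine le_trans (le_of_eq ?_) (hdeg v)
    rw [← Set.ncard_coe_finset]
    congr 1
    ext w; simp
  induction n with
  | zero =>
    refine le_trans (Finset.card_le_card ?_) (le_trans (hd x) (by simp))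
    intro v hv
    simp [ballF] at hv ⊢
    tauto
  | succ n ih =>
    have hsub : ballF G x (n + 1 + 1) \ ballF G x (n + 1) ⊆
        (ballF G x (n + 1) \ ballF G x n).biUnion
          (fun v => (Finset.univ.filter (fun w => G.Adj v w)) \ ballF G x (n + 1)) := by
      intro v hv
      rw [Finset.mem_sdiff, ballF, Finset.mem_union] at hv
      obtain ⟨hv1, hv2⟩ := hv
      rcases hv1 with hv1 | hv1
      · exact absurd hv1 hv2
      simp only [Finset.mem_filter, Finset.mem_univ, true_and] at hv1
      obtain ⟨w, hw, hwv⟩ := hv1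
      simp only [Finset.mem_biUnion, Finset.mem_sdiff, Finset.mem_filter, Finset.mem_univ, true_and]
      refine ⟨w, ⟨hw, fun hh => hv2 ?_⟩, hwv, hv2⟩
      rw [ballF, Finset.mem_union]
      right
      simp only [Finset.mem_filter, Finset.mem_univ, true_and]
      exact ⟨w, hh, hwv⟩
    refine le_trans (Finset.card_le_card hsub) ?_
    refine le_trans (Finset.card_biUnion_le_card_mul _ _ (Δ - 1) ?_) ?_
    · intro v hv
      rw [Finset.mem_sdiff, ballF, Finset.mem_union] at hv
      obtain ⟨hv1, hv2⟩ := hv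
      rcases hv1 with hv1 | hv1
      · exact absurd hv1 hv2
      simp only [Finset.mem_filter, Finset.mem_univ, true_and] at hv1
      obtain ⟨w, hw, hwv⟩ := hv1
      have hlt : ((Finset.univ.filter (fun w => G.Adj v w)) \ ballF G x (n + 1)).card <
          (Finset.univ.filter (fun w => G.Adj v w)).card := by
        apply Finset.card_lt_card
        refine ⟨Finset.sdiff_subset, fun hh => ?_⟩
        have h1 : w ∈ Finset.univ.filter (fun w => G.Adj v w) := by simpa using hwv.symm
        exact (Finset.mem_sdiff.1 (hh h1)).2 (ballF_mono (Nat.le_succ n) hw)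
      have := hd v
      omega
    · rw [pow_succ, ← mul_assoc]
      exact Nat.mul_le_mul_right _ ih

theorem ballF_card {V : Type*} [Fintype V] {G : SimpleGraph V} (Δ : ℕ) (hΔ : 3 ≤ Δ)
    (hdeg : ∀ v : V, (G.neighborSet v).ncard ≤ Δ) (x : V) (n : ℕ) :
    ((ballF G x n).card : ℝ) ≤ vol Δ n := by
  have hΔ' : (3 : ℝ) ≤ Δ := by exact_mod_cast hΔ
  have hne : (Δ : ℝ) - 2 ≠ 0 := by linarith
  induction n with
  | zero => simp [ballF, vol]
  | succ n ih =>
    have h1 : (ballF G x (n + 1)).card ≤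
        (ballF G x n).card + (ballF G x (n + 1) \ ballF G x n).card := by
      have := Finset.card_sdiff_add_card_eq_card (ballF_mono (G := G) (x := x) (Nat.le_add_right n 1))
      omega
    have h2 := sphere_bound Δ hdeg x n
    have h3 : ((ballF G x (n + 1)).card : ℝ) ≤ (ballF G x n).card + Δ * ((Δ : ℝ) - 1) ^ n := by
      have : (ballF G x (n + 1)).card ≤ (ballF G x n).card + Δ * (Δ - 1) ^ n := by omega
      have h4 : (((ballF G x (n + 1)).card : ℕ) : ℝ) ≤
          (((ballF G x n).card + Δ * (Δ - 1) ^ n : ℕ) : ℝ) := by exact_mod_cast this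
      rw [Nat.cast_add, Nat.cast_mul, Nat.cast_pow, Nat.cast_sub (by omega)] at h4
      simpa using h4
    have h5 : vol Δ (n + 1) = vol Δ n + Δ * ((Δ : ℝ) - 1) ^ n := by
      unfold vol
      field_simp
      ring
    linarith

theorem vol_ge_one (Δ : ℕ) (hΔ : 3 ≤ Δ) (n : ℕ) : 1 ≤ vol Δ n := by
  have hΔ' : (3 : ℝ) ≤ Δ := by exact_mod_cast hΔ
  unfold vol
  have : (1 : ℝ) ≤ ((Δ : ℝ) - 1) ^ n := one_le_pow₀ (by linarith)
  have h2 : 0 ≤ (Δ : ℝ) * (((Δ : ℝ) - 1) ^ n - 1) / ((Δ : ℝ) - 2) := by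
    apply div_nonneg
    · apply mul_nonneg <;> linarith
    · linarith
  linarith

theorem Adm2.card_le {V : Type*} [Fintype V] {G : SimpleGraph V} (t Δ : ℕ) (hΔ : 3 ≤ Δ)
    (hfree : IsEmpty (subdividedClaw t ↪g G))
    (hdeg : ∀ v : V, (G.neighborSet v).ncard ≤ Δ) {L U : Finset V} (h : Adm2 G L U) :
    (L.card : ℝ) ≤ 2 * vol Δ (2 * t) := by
  by_contra hcon
  push Not at hcon
  have hb := fun x => ballF_card (G := G) Δ hΔ hdeg x (2 * t)
  have h1 := vol_ge_one Δ hΔ (2 * t)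
  obtain ⟨x, hx⟩ := h.nonempty
  have ex1 : ∃ y ∈ L, y ∉ ballF G x (2 * t) := by
    by_contra! hh
    have : (L.card : ℝ) ≤ (ballF G x (2 * t)).card := by exact_mod_cast Finset.card_le_card hh
    linarith [hb x]
  obtain ⟨y, hy, hxy⟩ := ex1
  have ex2 : ∃ z ∈ L, z ∉ ballF G x (2 * t) ∪ ballF G y (2 * t) := by
    by_contra! hh
    have : (L.card : ℝ) ≤ (ballF G x (2 * t)).card + (ballF G y (2 * t)).card := by
      exact_mod_cast (Finset.card_le_card hh).trans (Finset.card_union_le _ _)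
    linarith [hb x, hb y]
  obtain ⟨z, hz, hxyz⟩ := ex2
  rw [Finset.mem_union, not_or] at hxyz
  have far : ∀ {x y : V}, y ∉ ballF G x (2 * t) → ∀ p : G.Walk x y, 2 * t < p.length := by
    intro x y hh p
    by_contra hlt
    exact hh (ballF_mono (by omega) (walk_ballF _ _ p rfl))
  have hne : ∀ {x y : V}, y ∉ ballF G x (2 * t) → x ≠ y := by
    rintro x y hh rfl
    exact hh (ballF_mono (Nat.zero_le _) (by simp [ballF]))
  have sep : ∀ {x y : V}, x ∈ L → y ∈ L → y ∉ ballF G x (2 * t) → SepP G [x] [y] := by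
    intro x y hx hy hh a ha b hb
    simp at ha hb
    subst ha hb
    exact ⟨hne hh, h.indep _ hx _ hy⟩
  have := three_arms t x y z (far hxy) (far hxyz.1) (far hxyz.2) h 0 x y z [] [] [] hx hy hz
    (by simp) (by simp) (by simp) (by simp [IndP]) (by simp [IndP]) (by simp [IndP])
    (sep hx hy hxy) (sep hx hz hxyz.1) (sep hy hz hxyz.2) rfl rfl rfl
    ⟨.nil, rfl⟩ ⟨.nil, rfl⟩ ⟨.nil, rfl⟩
  exact hfree.elim this.some

/-! ### Analytic part -/

theorem re_div_ge (k : ℝ) (hk : 0 < k) (z q : ℂ) (hz : z ∈ parabR k) (hq : 1 / 2 ≤ q.re) :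
    -(1 / (2 * k)) ≤ (z / q).re := by
  have hq0 : q ≠ 0 := by rintro rfl; norm_num at hq
  have hn : 0 < Complex.normSq q := Complex.normSq_pos.2 hq0
  have hw : ‖q⁻¹ - 1‖ ≤ 1 := by
    have e : q⁻¹ - 1 = (1 - q) / q := by field_simp
    rw [e, norm_div, div_le_one (norm_pos_iff.2 hq0)]
    rw [← sq_le_sq₀ (norm_nonneg _) (norm_nonneg _), Complex.sq_norm, Complex.sq_norm,
      Complex.normSq_apply, Complex.normSq_apply]
    simp
    nlinarith
  have hz' : ‖z‖ ≤ z.re + 1 / (2 * k) := by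
    have hz1 : z.im ^ 2 < z.re / k + 1 / (4 * k ^ 2) := hz
    have e1 : z.re / k + 1 / (4 * k ^ 2) = (z.re + 1 / (4 * k)) / k := by field_simp
    have h0 : 0 < z.re + 1 / (4 * k) := by
      have : 0 < (z.re + 1 / (4 * k)) / k := by rw [← e1]; nlinarith [sq_nonneg z.im]
      by_contra hh
      push Not at hh
      exact absurd this (not_lt.2 (div_nonpos_of_nonpos_of_nonneg hh hk.le))
    have h1 : 0 < 1 / (4 * k) := by positivity
    have e2 : 1 / (2 * k) = 2 * (1 / (4 * k)) := by field_simp; norm_num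
    have h2 : 0 ≤ z.re + 1 / (2 * k) := by rw [e2]; linarith
    rw [← sq_le_sq₀ (norm_nonneg _) h2, Complex.sq_norm, Complex.normSq_apply]
    have e3 : (z.re + 1 / (2 * k)) ^ 2 = z.re ^ 2 + (z.re / k + 1 / (4 * k ^ 2)) := by
      field_simp
      ring
    rw [e3]
    nlinarith
  have e : z / q = z + z * (q⁻¹ - 1) := by field_simp; ring
  have h3 : -‖z‖ ≤ (z * (q⁻¹ - 1)).re := by
    have h4 := Complex.abs_re_le_norm (z * (q⁻¹ - 1))
    have h5 : ‖z * (q⁻¹ - 1)‖ ≤ ‖z‖ := by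
      rw [norm_mul]
      exact mul_le_of_le_one_right (norm_nonneg _) hw
    linarith [neg_abs_le (z * (q⁻¹ - 1)).re]
  rw [e, Complex.add_re]
  linarith

theorem indepPolyOn_split {V : Type*} [Fintype V] (G : SimpleGraph V) (lam : V → ℂ)
    (U D : Finset V) (hD : D ⊆ U) :
    indepPolyOn G lam U = ∑ S ∈ D.powerset, if (∀ u ∈ S, ∀ v ∈ S, ¬ G.Adj u v) then
      (∏ v ∈ S, lam v) * indepPolyOn G lam ((U \ D) \ nbd G S) else 0 := by
  have h1 : indepPolyOn G lam U = ∑ S ∈ D.powerset, ∑ T ∈ (U \ D).powerset,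
      if (∀ u ∈ S ∪ T, ∀ v ∈ S ∪ T, ¬ G.Adj u v) then ∏ v ∈ S ∪ T, lam v else 0 := by
    rw [indepPolyOn, ← Finset.sum_product']
    refine Finset.sum_nbij' (fun T => (T ∩ D, T \ D)) (fun p => p.1 ∪ p.2) ?_ ?_ ?_ ?_ ?_
    · intro T hT
      simp only [Finset.mem_product, Finset.mem_powerset] at hT ⊢
      exact ⟨Finset.inter_subset_right, Finset.sdiff_subset_sdiff hT (le_refl _)⟩
    · rintro ⟨S, T⟩ hp
      simp only [Finset.mem_product, Finset.mem_powerset] at hp ⊢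
      exact Finset.union_subset (hp.1.trans hD) (hp.2.trans Finset.sdiff_subset)
    · intro T hT
      ext x
      simp only [Finset.mem_union, Finset.mem_inter, Finset.mem_sdiff]
      tauto
    · rintro ⟨S, T⟩ hp
      simp only [Finset.mem_product, Finset.mem_powerset] at hp
      have hS := hp.1
      have hT : ∀ x ∈ T, x ∈ U ∧ x ∉ D := fun x hx => by simpa using hp.2 hx
      ext x
      · simp only [Finset.mem_union, Finset.mem_inter]
        have := @hS x
        have := hT x
        tauto
      · simp only [Finset.mem_union, Finset.mem_sdiff]
        have := @hS x
        have := hT x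
        tauto
    · intro T hT
      have e : T ∩ D ∪ T \ D = T := by
        ext x
        simp only [Finset.mem_union, Finset.mem_inter, Finset.mem_sdiff]
        tauto
      simp only [e]
  rw [h1]
  refine Finset.sum_congr rfl fun S hS => ?_
  rw [Finset.mem_powerset] at hS
  have hdisj : ∀ T ∈ (U \ D).powerset, Disjoint S T := by
    intro T hT
    rw [Finset.mem_powerset] at hT
    rw [Finset.disjoint_left]
    intro x hx hxT
    exact (Finset.mem_sdiff.1 (hT hxT)).2 (hS hx)
  by_cases hSi : ∀ u ∈ S, ∀ v ∈ S, ¬ G.Adj u v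
  · rw [if_pos hSi, indepPolyOn, Finset.mul_sum]
    have hsub : ((U \ D) \ nbd G S).powerset ⊆ (U \ D).powerset :=
      Finset.powerset_mono.2 Finset.sdiff_subset
    rw [← Finset.sum_subset hsub]
    · refine Finset.sum_congr rfl fun T hT => ?_
      have hd := hdisj T (hsub hT)
      rw [Finset.mem_powerset] at hT
      have hno : ∀ x ∈ T, ∀ y ∈ S, ¬ G.Adj x y := by
        intro x hx y hy hxy
        exact (Finset.mem_sdiff.1 (hT hx)).2
          (mem_nbd.2 ⟨fun hh => Finset.disjoint_left.1 hd hh hx, y, hy, hxy⟩)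
      by_cases hTi : ∀ u ∈ T, ∀ v ∈ T, ¬ G.Adj u v
      · rw [if_pos, if_pos hTi, Finset.prod_union hd]
        intro x hx y hy
        rw [Finset.mem_union] at hx hy
        rcases hx with hx | hx <;> rcases hy with hy | hy
        · exact hSi x hx y hy
        · exact fun hh => hno y hy x hx hh.symm
        · exact hno x hx y hy
        · exact hTi x hx y hy
      · rw [if_neg, if_neg hTi, mul_zero]
        intro hh
        exact hTi fun x hx y hy => hh x (Finset.mem_union_right _ hx) y (Finset.mem_union_right _ hy)
    · intro T hT hT2
      rw [if_neg]
      intro hh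
      apply hT2
      rw [Finset.mem_powerset] at hT ⊢
      intro x hx
      rw [Finset.mem_sdiff]
      refine ⟨hT hx, fun hxn => ?_⟩
      obtain ⟨_, y, hy, hxy⟩ := mem_nbd.1 hxn
      exact hh x (Finset.mem_union_right _ hx) y (Finset.mem_union_left _ hy) hxy
  · rw [if_neg hSi]
    refine Finset.sum_eq_zero fun T hT => ?_
    rw [if_neg]
    intro hh
    exact hSi fun x hx y hy => hh x (Finset.mem_union_left _ hx) y (Finset.mem_union_left _ hy)

theorem core_ratio {V : Type*} [Fintype V] (G : SimpleGraph V) (lam : V → ℂ)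
    (U D : Finset V) (hD : D ⊆ U) (k : ℝ) (hk : (2 : ℝ) ^ D.card ≤ k)
    (hZ : indepPolyOn G lam (U \ D) ≠ 0)
    (hS : ∀ S ⊆ D, S.Nonempty → (∀ u ∈ S, ∀ v ∈ S, ¬ G.Adj u v) →
      (∏ v ∈ S, lam v) ∈ parabR k ∧
      1 / 2 ≤ (indepPolyOn G lam (U \ D) / indepPolyOn G lam ((U \ D) \ nbd G S)).re) :
    1 / 2 ≤ (indepPolyOn G lam U / indepPolyOn G lam (U \ D)).re := by
  have hk0 : 0 < k := lt_of_lt_of_le (by positivity) hk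
  rw [indepPolyOn_split G lam U D hD, Finset.sum_div, Complex.re_sum,
    ← Finset.add_sum_erase _ _ (Finset.empty_mem_powerset D)]
  have e0 : nbd G (∅ : Finset V) = ∅ := by simp [nbd]
  have h0 : ((if (∀ u ∈ (∅ : Finset V), ∀ v ∈ (∅ : Finset V), ¬ G.Adj u v) then
      (∏ v ∈ (∅ : Finset V), lam v) * indepPolyOn G lam ((U \ D) \ nbd G ∅) else 0) /
      indepPolyOn G lam (U \ D)).re = 1 := by
    rw [if_pos (by simp), e0, Finset.sdiff_empty, Finset.prod_empty, one_mul, div_self hZ]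
    simp
  rw [h0]
  have hterm : ∀ S ∈ D.powerset.erase ∅, -(1 / (2 * k)) ≤
      ((if (∀ u ∈ S, ∀ v ∈ S, ¬ G.Adj u v) then
      (∏ v ∈ S, lam v) * indepPolyOn G lam ((U \ D) \ nbd G S) else 0) /
      indepPolyOn G lam (U \ D)).re := by
    intro S hSD
    rw [Finset.mem_erase, Finset.mem_powerset] at hSD
    split_ifs with hi
    · obtain ⟨h1, h2⟩ := hS S hSD.2 (Finset.nonempty_iff_ne_empty.2 hSD.1) hi
      have := re_div_ge k hk0 _ _ h1 h2
      rwa [div_div_eq_mul_div] at this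
    · simp
      positivity
  have h2 := Finset.card_nsmul_le_sum _ _ _ hterm
  have hc : ((D.powerset.erase ∅).card : ℝ) ≤ k := by
    refine le_trans ?_ hk
    have : (D.powerset.erase ∅).card ≤ 2 ^ D.card := by
      rw [← Finset.card_powerset]
      exact Finset.card_erase_le
    exact_mod_cast this
  rw [nsmul_eq_mul] at h2
  have h3 : ((D.powerset.erase ∅).card : ℝ) * (1 / (2 * k)) ≤ 1 / 2 := by
    calc _ ≤ k * (1 / (2 * k)) := by gcongr
      _ = 1 / 2 := by field_simp
  linarith

theorem main_aux (t Δ : ℕ) (hΔ : 3 ≤ Δ)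
    {V : Type} [Fintype V] (G : SimpleGraph V)
    (hfree : IsEmpty (subdividedClaw t ↪g G))
    (hdeg : ∀ v : V, (G.neighborSet v).ncard ≤ Δ)
    (lam : V → ℂ)
    (hlam : ∀ S : Finset V, (S.card : ℝ) ≤ 2 * vol Δ (2 * t) →
      (∏ v ∈ S, lam v) ∈ parabR ((2 : ℝ) ^ ((Δ : ℝ) * (2 * vol Δ (2 * t))))) (n : ℕ) :
    ∀ U : Finset V, U.card = n → indepPolyOn G lam U ≠ 0 ∧
      (∀ L, Adm2 G L U →
        1 / 2 ≤ (indepPolyOn G lam U / indepPolyOn G lam (U \ nbd G L)).re) ∧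
      (∀ u, 1 / 2 ≤ (indepPolyOn G lam U / indepPolyOn G lam (U \ {u})).re) := by
  have hvol := vol_ge_one Δ hΔ (2 * t)
  have hΔ' : (3 : ℝ) ≤ Δ := by exact_mod_cast hΔ
  induction n using Nat.strong_induction_on with
  | _ n ih =>
    intro U hU
    -- the main recursion, for nonempty `D`
    have main : ∀ D ⊆ U, D.Nonempty → (D.card : ℝ) ≤ (Δ : ℝ) * (2 * vol Δ (2 * t)) →
        (∀ S ⊆ D, S.Nonempty → (∀ u ∈ S, ∀ v ∈ S, ¬ G.Adj u v) → Adm2 G S (U \ D)) →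
        1 / 2 ≤ (indepPolyOn G lam U / indepPolyOn G lam (U \ D)).re := by
      intro D hD hDne hcard hadm
      have hlt : (U \ D).card < n := by
        rw [← hU]
        exact Finset.card_lt_card (Finset.sdiff_ssubset hD hDne)
      obtain ⟨h1, h2, _⟩ := ih _ hlt (U \ D) rfl
      refine core_ratio G lam U D hD ((2 : ℝ) ^ ((Δ : ℝ) * (2 * vol Δ (2 * t)))) ?_ h1 ?_
      · rw [← Real.rpow_natCast]
        exact Real.rpow_le_rpow_of_exponent_le (by norm_num) hcard
      · intro S hSD hSne hSi
        have ha := hadm S hSD hSne hSi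
        exact ⟨hlam S (ha.card_le t Δ hΔ hfree hdeg), h2 S ha⟩
    have single : ∀ u ∈ U, 1 / 2 ≤ (indepPolyOn G lam U / indepPolyOn G lam (U \ {u})).re := by
      intro u hu
      refine main {u} (by simpa using hu) (by simp) (by simp; nlinarith) ?_
      intro S hS hSne _
      have : S = {u} := (Finset.subset_singleton_iff.1 hS).resolve_left hSne.ne_empty
      subst this
      exact Adm2.root u _ (by simp)
    have hne : indepPolyOn G lam U ≠ 0 := by
      rcases U.eq_empty_or_nonempty with rfl | ⟨u, hu⟩
      · simp [indepPolyOn]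
      · intro hh
        have := single u hu
        rw [hh] at this
        norm_num at this
    refine ⟨hne, ?_, ?_⟩
    · intro L hL
      have e : U \ nbd G L = U \ (nbd G L ∩ U) := by
        ext x; simp only [Finset.mem_sdiff, Finset.mem_inter]; tauto
      rcases (nbd G L ∩ U).eq_empty_or_nonempty with h0 | h0
      · rw [e, h0, Finset.sdiff_empty, div_self hne]
        norm_num
      · rw [e]
        refine main _ Finset.inter_subset_right h0 ?_ ?_
        · have h1 : (nbd G L ∩ U).card ≤ L.card * Δ := by
            refine le_trans (Finset.card_le_card (t := L.biUnion
              (fun v => Finset.univ.filter (fun w => G.Adj v w))) ?_)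
              (Finset.card_biUnion_le_card_mul _ _ _ ?_)
            · intro x hx
              obtain ⟨_, y, hy, hxy⟩ := mem_nbd.1 (Finset.mem_inter.1 hx).1
              simp only [Finset.mem_biUnion, Finset.mem_filter, Finset.mem_univ, true_and]
              exact ⟨y, hy, hxy.symm⟩
            · intro v _
              refine le_trans (le_of_eq ?_) (hdeg v)
              rw [← Set.ncard_coe_finset]
              congr 1
              ext w; simp
          have h2 := hL.card_le t Δ hΔ hfree hdeg
          have h3 : ((nbd G L ∩ U).card : ℝ) ≤ L.card * Δ := by exact_mod_cast h1
          nlinarith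
        · intro S hSD hSne hSi
          rw [← e]
          exact Adm2.step L U S hL hSne hSD hSi
    · intro u
      by_cases hu : u ∈ U
      · exact single u hu
      · rw [Finset.sdiff_eq_self_of_disjoint (Finset.disjoint_singleton_right.2 hu), div_self hne]
        norm_num

theorem bdry_eq_nbd {V : Type*} [Fintype V] (G : SimpleGraph V) (u : V) (X : Finset V)
    (hX : X.Nonempty) : bdry G u X = nbd G X := by
  rw [bdry, if_neg hX.ne_empty, nbd]

theorem Admissible.toAdm2 {V : Type*} [Fintype V] {G : SimpleGraph V} {u : V} {L U : Finset V}
    (h : Admissible G u L U) : (L = ∅ ∧ U = Finset.univ) ∨ Adm2 G L U := by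
  induction h with
  | base => exact Or.inl ⟨rfl, rfl⟩
  | root => exact Or.inr (Adm2.root u _ (by simp))
  | step L' U' L h1 h2 h3 h4 ih =>
    right
    rcases ih with ⟨rfl, rfl⟩ | ih
    · have hb : bdry G u ∅ = {u} := by simp [bdry]
      rw [hb] at h3 ⊢
      have : L = {u} := (Finset.subset_singleton_iff.1
        (h3.trans Finset.inter_subset_left)).resolve_left h2.ne_empty
      rw [this]
      exact Adm2.root u _ (by simp)
    · rw [bdry_eq_nbd G u L' ih.nonempty] at h3 ⊢
      exact Adm2.step L' U' L ih h2 h3 h4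

/-- with `r = 2·vol(Δ, 2t)`, if `G` is `S_{t,t,t}`-free of maximum
degree at most `Δ` and all products of at most `r` weights lie in `R(2^{Δr})`,
then for every admissible pair `(L, U)` one has `Z(U) ≠ 0`, `Z(U ∖ ∂L) ≠ 0` and
`Z(U)/Z(U ∖ ∂L) ∈ H(1/2)`; in particular `Z_{G,λ} ≠ 0`. -/
theorem stmt6 (t Δ : ℕ) (ht : 1 ≤ t) (hΔ : 3 ≤ Δ)
    {V : Type} [Fintype V] (G : SimpleGraph V)
    (hfree : IsEmpty (subdividedClaw t ↪g G))
    (hdeg : ∀ v : V, (G.neighborSet v).ncard ≤ Δ)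
    (lam : V → ℂ)
    (hlam : ∀ S : Finset V, (S.card : ℝ) ≤ 2 * vol Δ (2 * t) →
      (∏ v ∈ S, lam v) ∈ parabR ((2 : ℝ) ^ ((Δ : ℝ) * (2 * vol Δ (2 * t)))))
    (u : V) (L U : Finset V) (h : Admissible G u L U) :
    (indepPolyOn G lam U ≠ 0 ∧ indepPolyOn G lam (U \ bdry G u L) ≠ 0) ∧
    indepPolyOn G lam U / indepPolyOn G lam (U \ bdry G u L) ∈ halfH (1 / 2) ∧
    indepPoly G lam ≠ 0 := by
  have main := fun U => main_aux t Δ hΔ G hfree hdeg lam hlam _ U rfl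
  refine ⟨⟨(main U).1, (main _).1⟩, ?_, (main _).1⟩
  rw [halfH, Set.mem_setOf_eq]
  rcases h.toAdm2 with ⟨rfl, rfl⟩ | h'
  · have hb : bdry G u ∅ = {u} := by simp [bdry]
    rw [hb]
    exact (main _).2.2 u
  · rw [bdry_eq_nbd G u L h'.nonempty]
    exact (main _).2.1 L h'
end

section
/- Fix integers t ≥ 1 and Δ ≥ 3 and let r = 2·vol(Δ, 2t) where vol(Δ, t) = 1 + Δ·((Δ−1)^t − 1)/(Δ−2). If λ ∈ ℂ satisfies Re λ ≥ 0 and λ^s ∈ R(2^{Δr}) for every integer 1 ≤ s ≤ r, then for every finite S_{t,t,t}-free simple graph G of maximum degree at most Δ, the univariate independence polynomial satisfies Z_{G,λ} ≠ 0. -/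
attribute [local instance] Classical.propDecidable

/-- Neighbourhood of a set of vertices. -/
noncomputable def nbrS {V : Type*} [Fintype V] (G : SimpleGraph V) (S : Finset V) : Finset V :=
  Finset.univ.filter (fun v => ∃ x ∈ S, G.Adj x v)

theorem mem_nbrS {V : Type*} [Fintype V] {G : SimpleGraph V} {S : Finset V} {v : V} :
    v ∈ nbrS G S ↔ ∃ x ∈ S, G.Adj x v := by
  simp [nbrS]

/-- Pair (ball of radius k, sphere of radius k). -/
noncomputable def bs {V : Type*} [Fintype V] (G : SimpleGraph V) (a : V) :
    ℕ → Finset V × Finset V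
  | 0 => ({a}, {a})
  | k + 1 => ((bs G a k).1 ∪ (nbrS G (bs G a k).2 \ (bs G a k).1),
      nbrS G (bs G a k).2 \ (bs G a k).1)

theorem bs_sub {V : Type*} [Fintype V] (G : SimpleGraph V) (a : V) (k : ℕ) :
    (bs G a k).2 ⊆ (bs G a k).1 := by
  cases k with
  | zero => simp [bs]
  | succ k => simp only [bs]; exact Finset.subset_union_right

theorem bs_mono {V : Type*} [Fintype V] (G : SimpleGraph V) (a : V) :
    Monotone (fun k => (bs G a k).1) := by
  apply monotone_nat_of_le_succ
  intro k
  simp only [bs]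
  exact Finset.subset_union_left

theorem bs_adj {V : Type*} [Fintype V] (G : SimpleGraph V) (a : V) (k : ℕ) :
    ∀ v w, v ∈ (bs G a k).1 → G.Adj v w → w ∈ (bs G a (k + 1)).1 := by
  induction k with
  | zero =>
    intro v w hv h
    simp only [bs, Finset.mem_singleton] at hv
    subst hv
    simp only [bs, Finset.mem_union, Finset.mem_sdiff, mem_nbrS, Finset.mem_singleton]
    right
    exact ⟨⟨v, rfl, h⟩, h.ne'⟩
  | succ k ih =>
    intro v w hv h
    by_cases hw : w ∈ (bs G a (k + 1)).1
    · exact bs_mono G a (Nat.le_succ (k + 1)) hw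
    · have hv2 : v ∈ (bs G a (k + 1)).2 := by
        have hv' := hv
        rw [bs] at hv'
        simp only [Finset.mem_union] at hv'
        rcases hv' with h1 | h1
        · exact absurd (ih v w h1 h) hw
        · rw [bs]; exact h1
      rw [bs]
      simp only [Finset.mem_union, Finset.mem_sdiff, mem_nbrS]
      right
      exact ⟨⟨v, hv2, h⟩, hw⟩

theorem nbr_card {V : Type*} [Fintype V] {G : SimpleGraph V} {Δ : ℕ}
    (hdeg : ∀ v : V, (G.neighborSet v).ncard ≤ Δ) (x : V) :
    (Finset.univ.filter (fun v => G.Adj x v)).card ≤ Δ := by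
  have := hdeg x
  rw [Set.ncard_eq_toFinset_card'] at this
  refine le_trans (le_of_eq ?_) this
  congr 1
  ext v; simp

theorem nbrS_card {V : Type*} [Fintype V] {G : SimpleGraph V} {Δ : ℕ}
    (hdeg : ∀ v : V, (G.neighborSet v).ncard ≤ Δ) (S : Finset V) :
    (nbrS G S).card ≤ Δ * S.card := by
  have : nbrS G S ⊆ S.biUnion (fun x => Finset.univ.filter (fun v => G.Adj x v)) := by
    intro v hv
    rw [mem_nbrS] at hv
    simpa using hv
  refine (Finset.card_le_card this).trans ?_
  rw [mul_comm]
  exact Finset.card_biUnion_le_card_mul _ _ _ (fun x _ => nbr_card hdeg x)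

theorem sph_card {V : Type*} [Fintype V] {G : SimpleGraph V} {Δ : ℕ}
    (hdeg : ∀ v : V, (G.neighborSet v).ncard ≤ Δ) (a : V) (k : ℕ) :
    (bs G a (k + 1)).2.card ≤ Δ * (Δ - 1) ^ k := by
  induction k with
  | zero =>
    have h := nbrS_card hdeg ({a} : Finset V)
    simp only [bs, pow_zero]
    refine (Finset.card_le_card Finset.sdiff_subset).trans ?_
    simpa using h
  | succ k ih =>
    have hsub : (bs G a (k + 1 + 1)).2 ⊆ (bs G a (k + 1)).2.biUnion
        (fun x => (Finset.univ.filter (fun v => G.Adj x v)) \ (bs G a (k + 1)).1) := by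
      intro v hv
      rw [bs] at hv
      simp only [Finset.mem_sdiff, mem_nbrS] at hv
      obtain ⟨⟨x, hx, hxv⟩, hv⟩ := hv
      simp only [Finset.mem_biUnion, Finset.mem_sdiff, Finset.mem_filter, Finset.mem_univ, true_and]
      exact ⟨x, hx, hxv, hv⟩
    have hc : ∀ x ∈ (bs G a (k + 1)).2,
        ((Finset.univ.filter (fun v => G.Adj x v)) \ (bs G a (k + 1)).1).card ≤ Δ - 1 := by
      intro x hx
      have hx' := hx
      rw [bs] at hx'
      simp only [Finset.mem_sdiff, mem_nbrS] at hx'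
      obtain ⟨⟨y, hy, hyx⟩, -⟩ := hx'
      have hyb : y ∈ (bs G a (k + 1)).1 := bs_mono G a (Nat.le_succ k) (bs_sub G a k hy)
      have hlt : ((Finset.univ.filter (fun v => G.Adj x v)) \ (bs G a (k + 1)).1).card
          < (Finset.univ.filter (fun v => G.Adj x v)).card := by
        apply Finset.card_lt_card
        rw [Finset.ssubset_iff_of_subset Finset.sdiff_subset]
        exact ⟨y, by simpa using hyx.symm, by simp [hyb]⟩
      have := nbr_card hdeg x
      omega
    calc _ ≤ _ := Finset.card_le_card hsub
      _ ≤ _ := Finset.card_biUnion_le_card_mul _ _ _ hc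
      _ ≤ (Δ * (Δ - 1) ^ k) * (Δ - 1) := Nat.mul_le_mul_right _ ih
      _ = _ := by ring

theorem ball_card {V : Type*} [Fintype V] {G : SimpleGraph V} {Δ : ℕ} (hΔ : 3 ≤ Δ)
    (hdeg : ∀ v : V, (G.neighborSet v).ncard ≤ Δ) (a : V) (k : ℕ) :
    ((bs G a k).1.card : ℝ) ≤ vol Δ k := by
  have h3 : (3 : ℝ) ≤ Δ := by exact_mod_cast hΔ
  have h2 : (Δ : ℝ) - 2 ≠ 0 := by linarith
  induction k with
  | zero => simp [bs, vol]
  | succ k ih =>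
    have h1 : (bs G a (k + 1)).1.card ≤ (bs G a k).1.card + (bs G a (k + 1)).2.card := by
      conv_lhs => rw [bs]
      conv_rhs => rw [bs]
      exact Finset.card_union_le _ _
    have h4 : ((bs G a (k + 1)).2.card : ℝ) ≤ Δ * ((Δ : ℝ) - 1) ^ k := by
      have := sph_card hdeg a k
      have h5 : (((bs G a (k + 1)).2.card : ℕ) : ℝ) ≤ ((Δ * (Δ - 1) ^ k : ℕ) : ℝ) := by
        exact_mod_cast this
      rw [Nat.cast_mul, Nat.cast_pow, Nat.cast_sub (by omega)] at h5
      simpa using h5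
    have h6 : ((bs G a (k + 1)).1.card : ℝ) ≤ (bs G a k).1.card + (bs G a (k + 1)).2.card := by
      exact_mod_cast h1
    have h7 : vol Δ (k + 1) = vol Δ k + Δ * ((Δ : ℝ) - 1) ^ k := by
      unfold vol
      field_simp
      ring
    linarith

/-- Decomposition of the powerset sum. -/
theorem sum_powerset_split {V : Type*} (U T : Finset V) (hT : T ⊆ U)
    (f : Finset V → ℂ) :
    ∑ S ∈ U.powerset, f S = ∑ A ∈ T.powerset, ∑ B ∈ (U \ T).powerset, f (A ∪ B) := by
  rw [← Finset.sum_product']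
  refine Finset.sum_bij' (fun S _ => (S ∩ T, S \ T)) (fun p _ => p.1 ∪ p.2) ?_ ?_ ?_ ?_ ?_
  · intro S hS
    simp only [Finset.mem_powerset, Finset.mem_product] at *
    exact ⟨Finset.inter_subset_right, Finset.sdiff_subset_sdiff hS le_rfl⟩
  · intro p hp
    simp only [Finset.mem_powerset, Finset.mem_product] at *
    exact Finset.union_subset (hp.1.trans hT) (hp.2.trans Finset.sdiff_subset)
  · intro S hS
    simp only
    ext v; simp; tauto
  · intro p hp
    obtain ⟨A, B⟩ := p
    simp only [Finset.mem_powerset, Finset.mem_product] at *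
    obtain ⟨h1, h2⟩ := hp
    have h2' : ∀ v ∈ B, v ∉ T := fun v hv => (Finset.mem_sdiff.1 (h2 hv)).2
    ext v
    · have := @h1 v; have := h2' v; simp; tauto
    · have := @h1 v; have := h2' v; simp; tauto
  · intro S hS
    simp only
    congr 1
    ext v; simp; tauto

theorem Z_split {V : Type*} [Fintype V] (G : SimpleGraph V) (lam : ℂ) (U T : Finset V)
    (hT : T ⊆ U) :
    indepPolyOn G (fun _ => lam) U = ∑ A ∈ T.powerset,
      if (∀ u ∈ A, ∀ v ∈ A, ¬ G.Adj u v) then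
        lam ^ A.card * indepPolyOn G (fun _ => lam) ((U \ T) \ nbrS G A) else 0 := by
  unfold indepPolyOn
  rw [sum_powerset_split U T hT]
  refine Finset.sum_congr rfl fun A hA => ?_
  rw [Finset.mem_powerset] at hA
  by_cases hi : ∀ u ∈ A, ∀ v ∈ A, ¬ G.Adj u v
  · rw [if_pos hi, Finset.mul_sum]
    symm
    refine Finset.sum_subset_zero_on_sdiff (Finset.powerset_mono.2 Finset.sdiff_subset) ?_ ?_
    · intro B hB
      simp only [Finset.mem_sdiff, Finset.mem_powerset] at hB
      obtain ⟨hB1, hB2⟩ := hB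
      rw [if_neg]
      intro hAB
      apply hB2
      intro v hv
      rw [Finset.mem_sdiff]
      refine ⟨by simpa using hB1 hv, ?_⟩
      rw [mem_nbrS]
      rintro ⟨x, hx, hxv⟩
      exact hAB x (by simp [hx]) v (by simp [hv]) hxv
    · intro B hB
      rw [Finset.mem_powerset] at hB
      have hd : Disjoint A B := by
        rw [Finset.disjoint_left]
        intro v hv hv'
        have := hB hv'
        simp only [Finset.mem_sdiff] at this
        exact this.1.2 (hA hv)
      have hn : ∀ v ∈ B, ∀ x ∈ A, ¬ G.Adj x v := by
        intro v hv x hx hxv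
        have := hB hv
        rw [Finset.mem_sdiff, mem_nbrS] at this
        exact this.2 ⟨x, hx, hxv⟩
      by_cases hb : ∀ u ∈ B, ∀ v ∈ B, ¬ G.Adj u v
      · rw [if_pos hb, if_pos, Finset.prod_union hd]
        · simp
        · intro u hu v hv huv
          rw [Finset.mem_union] at hu hv
          rcases hu with hu | hu <;> rcases hv with hv | hv
          · exact hi u hu v hv huv
          · exact hn v hv u hu huv
          · exact hn u hu v hv huv.symm
          · exact hb u hu v hv huv
      · rw [if_neg hb, if_neg, mul_zero]
        intro h
        exact hb fun u hu v hv => h u (by simp [hu]) v (by simp [hv])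
  · rw [if_neg hi]
    apply Finset.sum_eq_zero
    intro B _
    rw [if_neg]
    intro h
    exact hi fun u hu v hv => h u (by simp [hu]) v (by simp [hv])

theorem parab_norm {k : ℝ} (hk : 0 < k) {z : ℂ} (hz : z ∈ parabR k) :
    ‖z‖ ≤ z.re + 1 / (2 * k) := by
  have h : z.im ^ 2 < z.re / k + 1 / (4 * k ^ 2) := hz
  have h1 : z.re / k + 1 / (4 * k ^ 2) = (z.re + 1 / (4 * k)) * (1 / k) := by
    field_simp
  have h2 : 0 < z.re + 1 / (4 * k) := by
    have h3 : 0 < (z.re + 1 / (4 * k)) * (1 / k) := by rw [← h1]; nlinarith [sq_nonneg z.im]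
    exact pos_of_mul_pos_left h3 (by positivity)
  have h4 : 0 < 1 / (4 * k) := by positivity
  have h5 : 1 / (2 * k) = 2 * (1 / (4 * k)) := by field_simp; norm_num
  have h6 : 0 ≤ z.re + 1 / (2 * k) := by rw [h5]; linarith
  apply le_of_sq_le_sq _ h6
  rw [← Complex.normSq_eq_norm_sq, Complex.normSq_apply]
  have : (z.re + 1 / (2 * k)) ^ 2 = z.re ^ 2 + (z.re / k + 1 / (4 * k ^ 2)) := by
    field_simp; ring
  rw [this]; nlinarith

theorem re_mul_inv {e : ℝ} {z g : ℂ} (hz : ‖z‖ ≤ z.re + e) (hg : 1 / 2 ≤ g.re) :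
    -e ≤ (z * g⁻¹).re := by
  have hg0 : g ≠ 0 := by
    rintro rfl
    norm_num at hg
  have h1 : ‖g⁻¹ - 1‖ ≤ 1 := by
    have : g⁻¹ - 1 = (1 - g) / g := by field_simp
    rw [this, norm_div, div_le_one (norm_pos_iff.2 hg0)]
    apply le_of_sq_le_sq _ (norm_nonneg _)
    rw [← Complex.normSq_eq_norm_sq, ← Complex.normSq_eq_norm_sq, Complex.normSq_apply,
      Complex.normSq_apply]
    simp
    nlinarith
  have h2 : z * g⁻¹ = z + z * (g⁻¹ - 1) := by ring
  have h3 : ‖z * (g⁻¹ - 1)‖ ≤ ‖z‖ := by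
    rw [norm_mul]
    exact mul_le_of_le_one_right (norm_nonneg _) h1
  have h4 := Complex.abs_re_le_norm (z * (g⁻¹ - 1))
  have h5 := neg_abs_le (z * (g⁻¹ - 1)).re
  rw [h2, Complex.add_re]
  linarith

theorem geodesic {V : Type*} (H : SimpleGraph V) {x c : V} (hr : H.Reachable x c) :
    ∃ (n : ℕ) (w : ℕ → V), w 0 = x ∧ w n = c ∧
      (∀ a ≤ n, ∀ b ≤ n, (H.Adj (w a) (w b) ↔ (a + 1 = b ∨ b + 1 = a))) ∧
      (∀ a ≤ n, ∀ b ≤ n, w a = w b → a = b) := by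
  obtain ⟨p, hp⟩ := hr.exists_walk_length_eq_dist
  have hadj : ∀ k, k < p.length → H.Adj (p.getVert k) (p.getVert (k + 1)) :=
    fun k hk => p.adj_getVert_succ hk
  have hstep : ∀ k, k < p.length →
      H.dist x (p.getVert (k + 1)) ≤ H.dist x (p.getVert k) + 1 := by
    intro k hk
    rcases (hadj k hk).diff_dist_adj (u := x) with h | h | h <;> omega
  have hup : ∀ k, k ≤ p.length → H.dist x (p.getVert k) ≤ k := by
    intro k
    induction k with
    | zero => intro _; simp
    | succ k ih => intro h; have := hstep k (by omega); have := ih (by omega); omega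
  have hlow : ∀ j, ∀ k, k + j = p.length → k ≤ H.dist x (p.getVert k) := by
    intro j
    induction j with
    | zero =>
      intro k hk
      have : k = p.length := by omega
      subst this
      rw [p.getVert_length, hp]
    | succ j ih =>
      intro k hk
      have := ih (k + 1) (by omega)
      have := hstep k (by omega)
      omega
  have hd : ∀ k, k ≤ p.length → H.dist x (p.getVert k) = k := fun k hk =>
    le_antisymm (hup k hk) (hlow (p.length - k) k (by omega))
  have hinj : ∀ a ≤ p.length, ∀ b ≤ p.length, p.getVert a = p.getVert b → a = b := by
    intro a ha b hb h
    rw [← hd a ha, h, hd b hb]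
  refine ⟨p.length, p.getVert, p.getVert_zero, p.getVert_length, ?_, hinj⟩
  intro a ha b hb
  constructor
  · intro h
    have h1 := hd a ha
    have h2 := hd b hb
    have hne : a ≠ b := by rintro rfl; exact H.loopless.irrefl _ h
    rcases h.diff_dist_adj (u := x) with h | h | h <;> omega
  · rintro (rfl | rfl)
    · exact hadj a (by omega)
    · exact (hadj b (by omega)).symm

/-- `f 0, …, f (t-1)` is a leg attached to `x`. -/
structure LegOK {V : Type*} (G : SimpleGraph V) (t : ℕ) (x : V) (f : ℕ → V) : Prop where
  ctr : ∀ a < t, (G.Adj x (f a) ↔ a = 0)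
  ne : ∀ a < t, x ≠ f a
  adj : ∀ a < t, ∀ b < t, (G.Adj (f a) (f b) ↔ (a + 1 = b ∨ b + 1 = a))
  inj : ∀ a < t, ∀ b < t, f a = f b → a = b

/-- Two legs are disjoint and not connected by edges. -/
def SepL {V : Type*} (G : SimpleGraph V) (t : ℕ) (f g : ℕ → V) : Prop :=
  ∀ a < t, ∀ b < t, f a ≠ g b ∧ ¬ G.Adj (f a) (g b)

theorem SepL.symm {V : Type*} {G : SimpleGraph V} {t : ℕ} {f g : ℕ → V} (h : SepL G t f g) :
    SepL G t g f := fun a ha b hb =>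
  ⟨(h b hb a ha).1.symm, fun h' => (h b hb a ha).2 h'.symm⟩

theorem claw_of_legs {V : Type*} (G : SimpleGraph V) (t : ℕ) (x : V) (f : Fin 3 → ℕ → V)
    (hl : ∀ i, LegOK G t x (f i)) (hs : ∀ i j, i ≠ j → SepL G t (f i) (f j)) :
    Nonempty (subdividedClaw t ↪g G) := by
  let F : Option (Fin 3 × Fin t) → V := fun o =>
    match o with
    | none => x
    | some (i, j) => f i j
  have hinj : Function.Injective F := by
    rintro (_ | ⟨i, j⟩) (_ | ⟨i', j'⟩) h
    · rfl
    · exact absurd h ((hl i').ne j' j'.2)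
    · exact absurd h.symm ((hl i).ne j j.2)
    · have h : f i j = f i' j' := h
      by_cases hii : i = i'
      · subst hii
        have := (hl i).inj j j.2 j' j'.2 h
        have : j = j' := Fin.ext this
        rw [this]
      · exact absurd h (hs i i' hii j j.2 j' j'.2).1
  refine ⟨⟨⟨F, hinj⟩, ?_⟩⟩
  rintro (_ | ⟨i, j⟩) (_ | ⟨i', j'⟩)
  · simp
  · have := (hl i').ctr j' j'.2
    simp only [subdividedClaw, SimpleGraph.fromRel_adj, Function.Embedding.coeFn_mk]
    change G.Adj x (f i' j') ↔ _
    rw [this]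
    simp
  · have := (hl i).ctr j j.2
    simp only [subdividedClaw, SimpleGraph.fromRel_adj, Function.Embedding.coeFn_mk]
    change G.Adj (f i j) x ↔ _
    rw [G.adj_comm, this]
    simp
  · simp only [subdividedClaw, SimpleGraph.fromRel_adj, Function.Embedding.coeFn_mk]
    change G.Adj (f i j) (f i' j') ↔ _
    by_cases hii : i = i'
    · subst hii
      rw [(hl i).adj j j.2 j' j'.2]
      constructor
      · intro h
        refine ⟨?_, ?_⟩
        · intro he
          simp only [Option.some.injEq, Prod.mk.injEq, true_and] at he
          rw [he] at h
          omega
        · simpa using h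
      · rintro ⟨-, h⟩
        simpa using h
    · have h1 := (hs i i' hii j j.2 j' j'.2).2
      have h2 : ¬ i' = i := fun h => hii h.symm
      simp [h1, hii, h2]

theorem claw3 {V : Type*} {G : SimpleGraph V} {t : ℕ} {x : V} {f g h : ℕ → V}
    (hf : LegOK G t x f) (hg : LegOK G t x g) (hh : LegOK G t x h)
    (h1 : SepL G t f g) (h2 : SepL G t f h) (h3 : SepL G t g h) :
    Nonempty (subdividedClaw t ↪g G) := by
  refine claw_of_legs G t x ![f, g, h] ?_ ?_
  · intro i; fin_cases i <;> assumption
  · intro i j hij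
    fin_cases i <;> fin_cases j <;>
      first
      | exact absurd rfl hij
      | assumption
      | (apply SepL.symm; assumption)

/-- Layered induced structure. -/
structure Chain {V : Type*} (G : SimpleGraph V) (u : V) (i : ℕ) (L : ℕ → Finset V) : Prop where
  root : L 0 = {u}
  par : ∀ j < i, ∀ v ∈ L (j + 1), ∃ w ∈ L j, G.Adj w v
  disj : ∀ j ≤ i, ∀ k ≤ i, ∀ v, v ∈ L j → v ∈ L k → j = k
  adj : ∀ j ≤ i, ∀ k ≤ i, ∀ v ∈ L j, ∀ w ∈ L k, G.Adj v w → (j + 1 = k ∨ k + 1 = j)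

/-- Monotone path through levels `j..i`. -/
structure MP {V : Type*} (G : SimpleGraph V) (L : ℕ → Finset V) (j i : ℕ) (p : ℕ → V) : Prop where
  mem : ∀ m, j ≤ m → m ≤ i → p m ∈ L m
  adj : ∀ m, j ≤ m → m < i → G.Adj (p m) (p (m + 1))

theorem MP.mono {V : Type*} {G : SimpleGraph V} {L : ℕ → Finset V} {j i j' : ℕ} {p : ℕ → V}
    (h : MP G L j i p) (hj : j ≤ j') : MP G L j' i p :=
  ⟨fun m h1 h2 => h.mem m (by omega) h2, fun m h1 h2 => h.adj m (by omega) h2⟩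

theorem Chain.exists_path {V : Type*} {G : SimpleGraph V} {u : V} {i : ℕ} {L : ℕ → Finset V}
    (hC : Chain G u i L) (k : ℕ) : k ≤ i → ∀ a ∈ L k, ∃ p, MP G L 0 k p ∧ p k = a := by
  induction k with
  | zero =>
    intro _ a ha
    refine ⟨fun _ => a, ⟨?_, ?_⟩, rfl⟩
    · intro m _ hm
      have : m = 0 := by omega
      subst this; exact ha
    · intro m _ hm; omega
  | succ k ih =>
    intro hk a ha
    obtain ⟨w, hw, hwa⟩ := hC.par k (by omega) a ha
    obtain ⟨p, hp, hpk⟩ := ih (by omega) w hw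
    refine ⟨Function.update p (k + 1) a, ⟨?_, ?_⟩, by simp⟩
    · intro m _ hm
      by_cases h : m = k + 1
      · subst h; simpa using ha
      · rw [Function.update_of_ne h]; exact hp.mem m (by omega) (by omega)
    · intro m _ hm
      rw [Function.update_of_ne (by omega : m ≠ k + 1)]
      by_cases h : m = k
      · subst h; simpa [hpk] using hwa
      · rw [Function.update_of_ne (by omega)]; exact hp.adj m (by omega) (by omega)

theorem MP.adj_iff {V : Type*} {G : SimpleGraph V} {u : V} {i : ℕ} {L : ℕ → Finset V}
    (hC : Chain G u i L) {j : ℕ} {p : ℕ → V} (hp : MP G L j i p) {m m' : ℕ}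
    (h1 : j ≤ m) (h2 : m ≤ i) (h3 : j ≤ m') (h4 : m' ≤ i) :
    G.Adj (p m) (p m') ↔ (m + 1 = m' ∨ m' + 1 = m) := by
  constructor
  · intro h
    exact hC.adj m h2 m' h4 _ (hp.mem m h1 h2) _ (hp.mem m' h3 h4) h
  · rintro (rfl | rfl)
    · exact hp.adj m h1 (by omega)
    · exact (hp.adj m' h3 (by omega)).symm

/-- A monotone path as a leg. -/
theorem MP.leg {V : Type*} {G : SimpleGraph V} {u : V} {i : ℕ} {L : ℕ → Finset V}
    (hC : Chain G u i L) {j t : ℕ} {p : ℕ → V} (hp : MP G L j i p) (hji : j + t ≤ i + 1)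
    {x : V} (hx : ∀ m, j ≤ m → m ≤ i → (G.Adj x (p m) ↔ m = j) ∧ x ≠ p m) :
    LegOK G t x (fun a => p (j + a)) where
  ctr := by
    intro a ha
    rw [(hx (j + a) (by omega) (by omega)).1]
    omega
  ne := fun a ha => (hx (j + a) (by omega) (by omega)).2
  adj := by
    intro a ha b hb
    rw [hp.adj_iff hC (by omega) (by omega) (by omega) (by omega)]
    omega
  inj := by
    intro a ha b hb h
    have := hC.disj (j + a) (by omega) (j + b) (by omega) (p (j + a))
      (hp.mem _ (by omega) (by omega)) (by
        have h : p (j + a) = p (j + b) := h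
        rw [h]; exact hp.mem _ (by omega) (by omega))
    omega

/-- leg starting one level below its centre -/
theorem MP.leg' {V : Type*} {G : SimpleGraph V} {u : V} {i : ℕ} {L : ℕ → Finset V}
    (hC : Chain G u i L) {j t : ℕ} {p : ℕ → V} (hp : MP G L (j + 1) i p) (hji : j + 1 + t ≤ i + 1)
    {x : V} (hi : j ≤ i) (hx : x ∈ L j) (hxp : G.Adj x (p (j + 1))) :
    LegOK G t x (fun a => p (j + 1 + a)) := by
  refine hp.leg hC hji ?_
  intro m h1 h2
  refine ⟨⟨fun h => ?_, fun h => ?_⟩, ?_⟩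
  · have := hC.adj j hi m h2 _ hx _ (hp.mem m h1 h2) h
    omega
  · subst h; exact hxp
  · rintro rfl
    have := hC.disj j hi m h2 _ hx (hp.mem m h1 h2)
    omega

/-- Contact of two paths at level `l`. -/
def PCon {V : Type*} (G : SimpleGraph V) (L : ℕ → Finset V) (p q : ℕ → V) (l : ℕ) : Prop :=
  ∃ x ∈ L l, G.Adj x (p (l + 1)) ∧ G.Adj x (q (l + 1))

theorem PCon.symm {V : Type*} {G : SimpleGraph V} {L : ℕ → Finset V} {p q : ℕ → V} {l : ℕ}
    (h : PCon G L p q l) : PCon G L q p l := by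
  obtain ⟨x, h1, h2, h3⟩ := h
  exact ⟨x, h1, h3, h2⟩

theorem tails_sep {V : Type*} {G : SimpleGraph V} {u : V} {i : ℕ} {L : ℕ → Finset V}
    (hC : Chain G u i L) {p q : ℕ → V} (hp : MP G L 0 i p) (hq : MP G L 0 i q)
    (hne : p i ≠ q i) {n : ℕ} (hcon : ∀ m, n ≤ m → m < i → ¬ PCon G L p q m) :
    ∀ m, n ≤ m → m ≤ i → ∀ m', n ≤ m' → m' ≤ i → p m ≠ q m' ∧ ¬ G.Adj (p m) (q m') := by
  intro m h1 h2 m' h3 h4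
  constructor
  · intro h
    have hm := hC.disj m h2 m' h4 (p m) (hp.mem m (by omega) h2)
      (h ▸ hq.mem m' (by omega) h4)
    subst hm
    by_cases hmi : m = i
    · subst hmi; exact hne h
    · exact hcon m h1 (by omega) ⟨p m, hp.mem m (by omega) h2, hp.adj m (by omega) (by omega),
        h ▸ hq.adj m (by omega) (by omega)⟩
  · intro h
    rcases hC.adj m h2 m' h4 _ (hp.mem m (by omega) h2) _ (hq.mem m' (by omega) h4) h with h' | h'
    · subst h'
      exact hcon m h1 (by omega) ⟨p m, hp.mem m (by omega) h2, hp.adj m (by omega) (by omega), h⟩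
    · subst h'
      exact hcon m' h3 (by omega) ⟨q m', hq.mem m' (by omega) h4, h.symm,
        hq.adj m' (by omega) (by omega)⟩

theorem shift_sep {V : Type*} {G : SimpleGraph V} {i n t : ℕ} {p q : ℕ → V}
    (h : ∀ m, n ≤ m → m ≤ i → ∀ m', n ≤ m' → m' ≤ i → p m ≠ q m' ∧ ¬ G.Adj (p m) (q m'))
    {j j' : ℕ} (hj : n ≤ j) (hj' : n ≤ j') (h1 : j + t ≤ i + 1) (h2 : j' + t ≤ i + 1) :
    SepL G t (fun a => p (j + a)) (fun a => q (j' + a)) :=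
  fun a ha b hb => h _ (by omega) (by omega) _ (by omega) (by omega)

/-- Case 3: `z` sees `q` but not `p`; `x` sees `p`, `q` but not `s`. -/
theorem core3 {V : Type*} {G : SimpleGraph V} {u : V} {i t l : ℕ} {L : ℕ → Finset V}
    (hC : Chain G u i L) {p q s : ℕ → V} (hp : MP G L 0 i p) (hq : MP G L 0 i q)
    (hs : MP G L 0 i s) (ht : 1 ≤ t) (hit : l + 1 + t ≤ i) {x : V} (hx : x ∈ L l)
    (hxp : G.Adj x (p (l + 1))) (hxq : G.Adj x (q (l + 1))) (hxs : ¬ G.Adj x (s (l + 1)))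
    (hzq : G.Adj (s l) (q (l + 1))) (hzp : ¬ G.Adj (s l) (p (l + 1)))
    (hpq : ∀ m, l + 1 ≤ m → m ≤ i → ∀ m', l + 1 ≤ m' → m' ≤ i → p m ≠ q m' ∧ ¬ G.Adj (p m) (q m'))
    (hps : ∀ m, l + 1 ≤ m → m ≤ i → ∀ m', l + 1 ≤ m' → m' ≤ i → p m ≠ s m' ∧ ¬ G.Adj (p m) (s m'))
    (hqs : ∀ m, l + 1 ≤ m → m ≤ i → ∀ m', l + 1 ≤ m' → m' ≤ i →
      q m ≠ s m' ∧ ¬ G.Adj (q m) (s m')) :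
    Nonempty (subdividedClaw t ↪g G) := by
  have hp' : MP G L l i (Function.update p l x) := by
    refine ⟨fun m h1 h2 => ?_, fun m h1 h2 => ?_⟩
    · by_cases h : m = l
      · subst h; simpa using hx
      · rw [Function.update_of_ne h]; exact hp.mem m (by omega) h2
    · rw [Function.update_of_ne (by omega : m + 1 ≠ l)]
      by_cases h : m = l
      · subst h; simpa using hxp
      · rw [Function.update_of_ne h]; exact hp.adj m (by omega) h2
  have hup : ∀ m, l + 1 ≤ m → Function.update p l x m = p m := fun m hm =>
    Function.update_of_ne (by omega) _ _
  -- level facts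
  have nadj : ∀ v j w k, j ≤ i → k ≤ i → v ∈ L j → w ∈ L k → j + 1 ≠ k → k + 1 ≠ j →
      ¬ G.Adj v w := by
    intro v j w k h1 h2 h3 h4 h5 h6 h
    have := hC.adj j h1 k h2 v h3 w h4 h
    omega
  have nne : ∀ v j w k, j ≤ i → k ≤ i → v ∈ L j → w ∈ L k → j ≠ k → v ≠ w := by
    rintro v j w k h1 h2 h3 h4 h5 rfl
    exact h5 (hC.disj j h1 k h2 v h3 h4)
  have hqn : q (l + 1) ∈ L (l + 1) := hq.mem _ (by omega) (by omega)
  refine claw3 (x := q (l + 1)) (f := fun a => Function.update p l x (l + a))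
    (g := fun a => s (l + a)) (h := fun a => q (l + 1 + 1 + a)) ?_ ?_ ?_ ?_ ?_ ?_
  · refine hp'.leg hC (by omega) ?_
    intro m h1 h2
    by_cases h : m = l
    · subst h
      rw [Function.update_self]
      exact ⟨⟨fun _ => rfl, fun _ => hxq.symm⟩, nne _ _ _ _ (by omega) (by omega) hqn hx (by omega)⟩
    · have := hpq m (by omega) h2 (l + 1) (by omega) (by omega)
      rw [hup m (by omega)]
      exact ⟨⟨fun h' => absurd h'.symm this.2, fun h' => absurd h' h⟩, this.1.symm⟩
  · refine (hs.mono (Nat.zero_le l)).leg hC (by omega) ?_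
    intro m h1 h2
    by_cases h : m = l
    · subst h
      exact ⟨⟨fun _ => rfl, fun _ => hzq.symm⟩, nne _ _ _ _ (by omega) (by omega) hqn
        (hs.mem _ (by omega) (by omega)) (by omega)⟩
    · have := hqs (l + 1) (by omega) (by omega) m (by omega) h2
      exact ⟨⟨fun h' => absurd h' this.2, fun h' => absurd h' h⟩, this.1⟩
  · exact (hq.mono (Nat.zero_le _)).leg' hC (by omega) (by omega) hqn
      (hq.adj _ (by omega) (by omega))
  · have key : ∀ m, l ≤ m → m ≤ i → ∀ m', l ≤ m' → m' ≤ i →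
        Function.update p l x m ≠ s m' ∧ ¬ G.Adj (Function.update p l x m) (s m') := by
      intro m h1 h2 m' h3 h4
      have hm' := hs.mem m' (by omega) h4
      by_cases h : m = l
      · subst h
        rw [Function.update_self]
        by_cases h' : m' = m
        · subst h'
          refine ⟨?_, nadj _ _ _ _ (by omega) (by omega) hx hm' (by omega) (by omega)⟩
          rintro rfl
          exact hzp hxp
        · refine ⟨nne _ _ _ _ (by omega) (by omega) hx hm' (by omega), ?_⟩
          by_cases h'' : m' = m + 1
          · subst h''; exact hxs
          · exact nadj _ _ _ _ (by omega) (by omega) hx hm' (by omega) (by omega)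
      · rw [hup m (by omega)]
        have hm := hp.mem m (by omega) h2
        by_cases h' : m' = l
        · subst h'
          refine ⟨nne _ _ _ _ (by omega) (by omega) hm hm' (by omega), ?_⟩
          by_cases h'' : m = m' + 1
          · subst h''; exact fun h => hzp h.symm
          · exact nadj _ _ _ _ (by omega) (by omega) hm hm' (by omega) (by omega)
        · exact hps m (by omega) h2 m' (by omega) h4
    exact shift_sep key le_rfl le_rfl (by omega) (by omega)
  · intro a ha b hb
    simp only
    by_cases h : a = 0
    · subst h
      rw [Nat.add_zero, Function.update_self]
      have hm := hq.mem (l + 1 + 1 + b) (by omega) (by omega)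
      exact ⟨nne _ _ _ _ (by omega) (by omega) hx hm (by omega),
        nadj _ _ _ _ (by omega) (by omega) hx hm (by omega) (by omega)⟩
    · rw [hup _ (by omega)]
      exact hpq _ (by omega) (by omega) _ (by omega) (by omega)
  · intro a ha b hb
    simp only
    by_cases h : a = 0
    · subst h
      have hm := hq.mem (l + 1 + 1 + b) (by omega) (by omega)
      have hm' := hs.mem (l + 0) (by omega) (by omega)
      exact ⟨nne _ _ _ _ (by omega) (by omega) hm' hm (by omega),
        nadj _ _ _ _ (by omega) (by omega) hm' hm (by omega) (by omega)⟩
    · have := hqs (l + 1 + 1 + b) (by omega) (by omega) (l + a) (by omega) (by omega)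
      exact ⟨this.1.symm, fun h => this.2 h.symm⟩

/-- Case 1: some vertex sees all three. -/
theorem core1 {V : Type*} {G : SimpleGraph V} {u : V} {i t l : ℕ} {L : ℕ → Finset V}
    (hC : Chain G u i L) {p q s : ℕ → V} (hp : MP G L 0 i p) (hq : MP G L 0 i q)
    (hs : MP G L 0 i s) (hit : l + 1 + t ≤ i) {x : V} (hx : x ∈ L l)
    (hxp : G.Adj x (p (l + 1))) (hxq : G.Adj x (q (l + 1))) (hxs : G.Adj x (s (l + 1)))
    (hpq : ∀ m, l + 1 ≤ m → m ≤ i → ∀ m', l + 1 ≤ m' → m' ≤ i → p m ≠ q m' ∧ ¬ G.Adj (p m) (q m'))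
    (hps : ∀ m, l + 1 ≤ m → m ≤ i → ∀ m', l + 1 ≤ m' → m' ≤ i → p m ≠ s m' ∧ ¬ G.Adj (p m) (s m'))
    (hqs : ∀ m, l + 1 ≤ m → m ≤ i → ∀ m', l + 1 ≤ m' → m' ≤ i →
      q m ≠ s m' ∧ ¬ G.Adj (q m) (s m')) :
    Nonempty (subdividedClaw t ↪g G) :=
  claw3 ((hp.mono (Nat.zero_le _)).leg' hC (by omega) (by omega) hx hxp)
    ((hq.mono (Nat.zero_le _)).leg' hC (by omega) (by omega) hx hxq)
    ((hs.mono (Nat.zero_le _)).leg' hC (by omega) (by omega) hx hxs)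
    (shift_sep hpq le_rfl le_rfl (by omega) (by omega))
    (shift_sep hps le_rfl le_rfl (by omega) (by omega))
    (shift_sep hqs le_rfl le_rfl (by omega) (by omega))

/-- Case 2: `z` sees neither `p` nor `q`. -/
theorem core2 {V : Type*} {G : SimpleGraph V} {u : V} {i t l : ℕ} {L : ℕ → Finset V}
    (hC : Chain G u i L) {p q s : ℕ → V} (hp : MP G L 0 i p) (hq : MP G L 0 i q)
    (hs : MP G L 0 i s) (hit : l + 1 + t ≤ i) {x : V} (hx : x ∈ L l)
    (hxp : G.Adj x (p (l + 1))) (hxq : G.Adj x (q (l + 1)))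
    (hzp : ¬ G.Adj (s l) (p (l + 1))) (hzq : ¬ G.Adj (s l) (q (l + 1)))
    (hpq : ∀ m, l + 1 ≤ m → m ≤ i → ∀ m', l + 1 ≤ m' → m' ≤ i → p m ≠ q m' ∧ ¬ G.Adj (p m) (q m'))
    (hps : ∀ m, l + 1 ≤ m → m ≤ i → ∀ m', l + 1 ≤ m' → m' ≤ i → p m ≠ s m' ∧ ¬ G.Adj (p m) (s m'))
    (hqs : ∀ m, l + 1 ≤ m → m ≤ i → ∀ m', l + 1 ≤ m' → m' ≤ i →
      q m ≠ s m' ∧ ¬ G.Adj (q m) (s m')) :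
    Nonempty (subdividedClaw t ↪g G) := by
  have nadj : ∀ v j w k, j ≤ i → k ≤ i → v ∈ L j → w ∈ L k → j + 1 ≠ k → k + 1 ≠ j →
      ¬ G.Adj v w := by
    intro v j w k h1 h2 h3 h4 h5 h6 h
    have := hC.adj j h1 k h2 v h3 w h4 h
    omega
  have nne : ∀ v j w k, j ≤ i → k ≤ i → v ∈ L j → w ∈ L k → j ≠ k → v ≠ w := by
    rintro v j w k h1 h2 h3 h4 h5 rfl
    exact h5 (hC.disj j h1 k h2 v h3 h4)
  let S : Set V := {v | (∃ m, m < l ∧ v ∈ L m) ∨ v = x ∨ ∃ m, m ≤ i ∧ v = s m}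
  let H : SimpleGraph V :=
    { Adj := fun v w => G.Adj v w ∧ v ∈ S ∧ w ∈ S
      symm := ⟨fun v w h => ⟨h.1.symm, h.2.2, h.2.1⟩⟩
      loopless := ⟨fun v h => G.loopless.irrefl v h.1⟩ }
  have hHadj : ∀ v w, H.Adj v w ↔ (G.Adj v w ∧ v ∈ S ∧ w ∈ S) := fun v w => Iff.rfl
  have hxS : x ∈ S := Or.inr (Or.inl rfl)
  have hsS : ∀ m, m ≤ i → s m ∈ S := fun m hm => Or.inr (Or.inr ⟨m, hm, rfl⟩)
  obtain ⟨y, hy, hyx⟩ := hC.exists_path l (by omega) x hx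
  have hyS : ∀ m, m ≤ l → y m ∈ S := by
    intro m hm
    by_cases h : m = l
    · subst h; rw [hyx]; exact hxS
    · exact Or.inl ⟨m, by omega, hy.mem m (by omega) hm⟩
  have hroot : y 0 = s 0 := by
    have h1 := hy.mem 0 (by omega) (by omega)
    have h2 := hs.mem 0 (by omega) (by omega)
    rw [hC.root, Finset.mem_singleton] at h1 h2
    rw [h1, h2]
  have hr1 : ∀ m, m ≤ l → H.Reachable (y 0) (y m) := by
    intro m
    induction m with
    | zero => intro _; exact SimpleGraph.Reachable.refl _
    | succ m ih =>
      intro hm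
      refine (ih (by omega)).trans (SimpleGraph.Adj.reachable ?_)
      exact ⟨hy.adj m (by omega) (by omega), hyS m (by omega), hyS _ hm⟩
  have hr2 : ∀ m, m ≤ i → H.Reachable (s 0) (s m) := by
    intro m
    induction m with
    | zero => intro _; exact SimpleGraph.Reachable.refl _
    | succ m ih =>
      intro hm
      refine (ih (by omega)).trans (SimpleGraph.Adj.reachable ?_)
      exact ⟨hs.adj m (by omega) (by omega), hsS m (by omega), hsS _ hm⟩
  have hr : H.Reachable x (s i) := by
    have h1 := hr1 l le_rfl
    rw [hyx, hroot] at h1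
    exact h1.symm.trans (hr2 i le_rfl)
  obtain ⟨n, w, hw0, hwn, hwadj, hwinj⟩ := geodesic H hr
  have hwS : ∀ k, k ≤ n → w k ∈ S := by
    intro k hk
    cases k with
    | zero => rw [hw0]; exact hxS
    | succ k => exact ((hwadj k (by omega) (k + 1) hk).2 (Or.inl rfl)).2.2
  have hSlev : ∀ v ∈ S, ∃ m, m ≤ i ∧ v ∈ L m := by
    rintro v (⟨m, hm, hv⟩ | rfl | ⟨m, hm, rfl⟩)
    · exact ⟨m, by omega, hv⟩
    · exact ⟨l, by omega, hx⟩
    · exact ⟨m, hm, hs.mem m (by omega) hm⟩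
  have hlev : ∀ k, k ≤ n → ∃ m, m ≤ i ∧ m ≤ l + k ∧ w k ∈ L m := by
    intro k
    induction k with
    | zero => intro _; exact ⟨l, by omega, by omega, by rw [hw0]; exact hx⟩
    | succ k ih =>
      intro hk
      obtain ⟨m, h1, h2, h3⟩ := ih (by omega)
      obtain ⟨m', h4, h5⟩ := hSlev _ (hwS (k + 1) hk)
      have := hC.adj m h1 m' h4 _ h3 _ h5 ((hwadj k (by omega) (k + 1) hk).2 (Or.inl rfl)).1
      exact ⟨m', h4, by omega, h5⟩
  have hn : i ≤ l + n := by
    obtain ⟨m, h1, h2, h3⟩ := hlev n le_rfl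
    rw [hwn] at h3
    have := hC.disj m h1 i le_rfl _ h3 (hs.mem i (by omega) le_rfl)
    omega
  have hwG : ∀ a ≤ n, ∀ b ≤ n, (G.Adj (w a) (w b) ↔ (a + 1 = b ∨ b + 1 = a)) := by
    intro a ha b hb
    rw [← hwadj a ha b hb, hHadj]
    exact ⟨fun h => ⟨h, hwS a ha, hwS b hb⟩, fun h => h.1⟩
  have sep : ∀ p' : ℕ → V, MP G L 0 i p' → ¬ G.Adj (s l) (p' (l + 1)) →
      (∀ m, l + 1 ≤ m → m ≤ i → ∀ m', l + 1 ≤ m' → m' ≤ i →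
        p' m ≠ s m' ∧ ¬ G.Adj (p' m) (s m')) →
      SepL G t (fun a => p' (l + 1 + a)) (fun a => w (a + 1)) := by
    intro p' hp' hz hsep a ha b hb
    simp only
    have hne : w (b + 1) ≠ x := by
      intro h
      rw [← hw0] at h
      have := hwinj _ (by omega) _ (by omega) h
      omega
    have hm := hp'.mem (l + 1 + a) (by omega) (by omega)
    rcases hwS (b + 1) (by omega) with ⟨m, h1, h2⟩ | h | ⟨m, h1, h2⟩
    · exact ⟨nne _ _ _ _ (by omega) (by omega) hm h2 (by omega),
        nadj _ _ _ _ (by omega) (by omega) hm h2 (by omega) (by omega)⟩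
    · exact absurd h hne
    · rw [h2]
      have hm' := hs.mem m (by omega) h1
      by_cases h3 : l + 1 ≤ m
      · exact hsep _ (by omega) (by omega) _ h3 h1
      · refine ⟨nne _ _ _ _ (by omega) (by omega) hm hm' (by omega), ?_⟩
        by_cases h4 : m = l ∧ a = 0
        · obtain ⟨rfl, rfl⟩ := h4
          exact fun h => hz h.symm
        · exact nadj _ _ _ _ (by omega) (by omega) hm hm' (by omega) (by omega)
  refine claw3 ((hp.mono (Nat.zero_le _)).leg' hC (by omega) (by omega) hx hxp)
    ((hq.mono (Nat.zero_le _)).leg' hC (by omega) (by omega) hx hxq)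
    (h := fun a => w (a + 1)) ?_
    (shift_sep hpq le_rfl le_rfl (by omega) (by omega)) (sep p hp hzp hps) (sep q hq hzq hqs)
  refine ⟨?_, ?_, ?_, ?_⟩
  · intro a ha
    have := hwG 0 (by omega) (a + 1) (by omega)
    rw [hw0] at this
    rw [this]; omega
  · intro a ha h
    have := hwinj 0 (by omega) (a + 1) (by omega) (by rw [hw0]; exact h)
    omega
  · intro a ha b hb
    rw [hwG (a + 1) (by omega) (b + 1) (by omega)]
    omega
  · intro a ha b hb h
    have := hwinj (a + 1) (by omega) (b + 1) (by omega) h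
    omega

theorem core {V : Type*} [Fintype V] {G : SimpleGraph V} {u : V} {i t l : ℕ} {L : ℕ → Finset V}
    (hC : Chain G u i L) {p q s : ℕ → V} (hp : MP G L 0 i p) (hq : MP G L 0 i q)
    (hs : MP G L 0 i s) (ht : 1 ≤ t) (hli : l < i) (hcon : PCon G L p q l)
    (hfar : q i ∉ (bs G (p i) (2 * t)).1)
    (hnpq : p i ≠ q i) (hnps : p i ≠ s i) (hnqs : q i ≠ s i)
    (h1 : ∀ m, l + 1 ≤ m → m < i → ¬ PCon G L p q m)
    (h2 : ∀ m, l + 1 ≤ m → m < i → ¬ PCon G L p s m)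
    (h3 : ∀ m, l + 1 ≤ m → m < i → ¬ PCon G L q s m) :
    Nonempty (subdividedClaw t ↪g G) := by
  have hpq := tails_sep hC hp hq hnpq h1
  have hps := tails_sep hC hp hs hnps h2
  have hqs := tails_sep hC hq hs hnqs h3
  obtain ⟨x, hx, hxp, hxq⟩ := hcon
  have hup : ∀ d, d + l + 1 ≤ i → p (i - d) ∈ (bs G (p i) d).1 := by
    intro d
    induction d with
    | zero => intro _; simp [bs]
    | succ d ih =>
      intro hd
      refine bs_adj G _ d _ _ (ih (by omega)) ?_
      have := hp.adj (i - (d + 1)) (by omega) (by omega)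
      rw [show i - (d + 1) + 1 = i - d by omega] at this
      exact this.symm
  have hxb : x ∈ (bs G (p i) (i - l)).1 := by
    have := hup (i - l - 1) (by omega)
    rw [show i - (i - l - 1) = l + 1 by omega] at this
    have := bs_adj G _ _ _ _ this hxp.symm
    rwa [show i - l - 1 + 1 = i - l by omega] at this
  have hdown : ∀ d, l + 1 + d ≤ i → q (l + 1 + d) ∈ (bs G (p i) (i - l + 1 + d)).1 := by
    intro d
    induction d with
    | zero => intro _; exact bs_adj G _ _ _ _ hxb hxq
    | succ d ih =>
      intro hd
      exact bs_adj G _ _ _ _ (ih (by omega)) (hq.adj _ (by omega) (by omega))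
  have hit : l + 1 + t ≤ i := by
    by_contra hlt
    apply hfar
    have := hdown (i - (l + 1)) (by omega)
    rw [show l + 1 + (i - (l + 1)) = i by omega] at this
    exact bs_mono G _ (by omega) this
  have hz := hs.mem l (by omega) (by omega)
  have hzs := hs.adj l (by omega) (by omega)
  by_cases hxs : G.Adj x (s (l + 1))
  · exact core1 hC hp hq hs hit hx hxp hxq hxs hpq hps hqs
  by_cases hzp : G.Adj (s l) (p (l + 1)) <;> by_cases hzq : G.Adj (s l) (q (l + 1))
  · exact core1 hC hp hq hs hit hz hzp hzq hzs hpq hps hqs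
  · refine core3 hC hq hp hs ht hit hx hxq hxp hxs hzp hzq ?_ hqs hps
    intro m h1 h2 m' h3 h4
    have := hpq m' h3 h4 m h1 h2
    exact ⟨this.1.symm, fun h => this.2 h.symm⟩
  · exact core3 hC hp hq hs ht hit hx hxp hxq hxs hzq hzp hpq hps hqs
  · exact core2 hC hp hq hs hit hx hxp hxq hzp hzq hpq hps hqs

theorem three_far {V : Type*} [Fintype V] {G : SimpleGraph V} {u : V} {i t : ℕ}
    {L : ℕ → Finset V} (ht : 1 ≤ t) (hC : Chain G u i L) {a b c : V} (ha : a ∈ L i) (hb : b ∈ L i)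
    (hc : c ∈ L i) (hab : b ∉ (bs G a (2 * t)).1) (hac : c ∉ (bs G a (2 * t)).1)
    (hbc : c ∉ (bs G b (2 * t)).1) : Nonempty (subdividedClaw t ↪g G) := by
  have hself : ∀ v, v ∈ (bs G v (2 * t)).1 := fun v =>
    bs_mono G v (Nat.zero_le _) (by simp [bs])
  have nab : a ≠ b := by rintro rfl; exact hab (hself _)
  have nac : a ≠ c := by rintro rfl; exact hac (hself _)
  have nbc : b ≠ c := by rintro rfl; exact hbc (hself _)
  obtain ⟨p, hp, hpa⟩ := hC.exists_path i le_rfl a ha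
  obtain ⟨q, hq, hqb⟩ := hC.exists_path i le_rfl b hb
  obtain ⟨s, hs, hsc⟩ := hC.exists_path i le_rfl c hc
  subst hpa hqb hsc
  have hi : 0 < i := by
    rcases Nat.eq_zero_or_pos i with h | h
    · subst h
      rw [hC.root, Finset.mem_singleton] at ha hb
      exact absurd (ha.trans hb.symm) nab
    · exact h
  let P : ℕ → Prop := fun m => m < i ∧ (PCon G L p q m ∨ PCon G L p s m ∨ PCon G L q s m)
  have h0 : P 0 := by
    refine ⟨hi, Or.inl ⟨p 0, hp.mem 0 le_rfl (by omega), hp.adj 0 le_rfl hi, ?_⟩⟩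
    have e1 := hp.mem 0 le_rfl (by omega)
    have e2 := hq.mem 0 le_rfl (by omega)
    rw [hC.root, Finset.mem_singleton] at e1 e2
    rw [e1, ← e2]
    exact hq.adj 0 le_rfl hi
  have hl : P (Nat.findGreatest P i) := Nat.findGreatest_spec (Nat.zero_le i) h0
  have hmax : ∀ m, Nat.findGreatest P i + 1 ≤ m → m < i → ¬ P m := fun m h1 h2 =>
    Nat.findGreatest_is_greatest (n := i) (by omega) (by omega)
  generalize Nat.findGreatest P i = l at hl hmax
  have m1 : ∀ m, l + 1 ≤ m → m < i → ¬ PCon G L p q m := fun m h1 h2 h =>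
    hmax m h1 h2 ⟨h2, Or.inl h⟩
  have m2 : ∀ m, l + 1 ≤ m → m < i → ¬ PCon G L p s m := fun m h1 h2 h =>
    hmax m h1 h2 ⟨h2, Or.inr (Or.inl h)⟩
  have m3 : ∀ m, l + 1 ≤ m → m < i → ¬ PCon G L q s m := fun m h1 h2 h =>
    hmax m h1 h2 ⟨h2, Or.inr (Or.inr h)⟩
  have m1' : ∀ m, l + 1 ≤ m → m < i → ¬ PCon G L q p m := fun m h1 h2 h => m1 m h1 h2 h.symm
  have m2' : ∀ m, l + 1 ≤ m → m < i → ¬ PCon G L s p m := fun m h1 h2 h => m2 m h1 h2 h.symm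
  have m3' : ∀ m, l + 1 ≤ m → m < i → ¬ PCon G L s q m := fun m h1 h2 h => m3 m h1 h2 h.symm
  obtain ⟨hli, h | h | h⟩ := hl
  · exact core hC hp hq hs ht hli h hab nab nac nbc m1 m2 m3
  · exact core hC hp hs hq ht hli h hac nac nab nbc.symm m2 m1 m3'
  · exact core hC hq hs hp ht hli h hbc nbc nab.symm nac.symm m3 m1' m2'

theorem level_card {V : Type*} [Fintype V] {G : SimpleGraph V} {u : V} {i t Δ : ℕ}
    {L : ℕ → Finset V} (ht : 1 ≤ t) (hΔ : 3 ≤ Δ) (hC : Chain G u i L)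
    (hfree : IsEmpty (subdividedClaw t ↪g G))
    (hdeg : ∀ v : V, (G.neighborSet v).ncard ≤ Δ) :
    ((L i).card : ℝ) ≤ 2 * vol Δ (2 * t) := by
  have hb := fun a => ball_card hΔ hdeg a (2 * t)
  by_contra hlt
  push Not at hlt
  have pick : ∀ B : Finset V, (B.card : ℝ) ≤ 2 * vol Δ (2 * t) → ∃ a ∈ L i, a ∉ B := by
    intro B hB
    by_contra hno
    push Not at hno
    have h1 : (L i).card ≤ B.card := Finset.card_le_card hno
    have h2 : ((L i).card : ℝ) ≤ B.card := by exact_mod_cast h1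
    linarith
  have hvol : 0 ≤ vol Δ (2 * t) := le_trans (Nat.cast_nonneg _) (hb u)
  obtain ⟨a, ha, -⟩ := pick ∅ (by simpa using hvol)
  obtain ⟨b, hbm, hab⟩ := pick (bs G a (2 * t)).1 (by have := hb a; linarith)
  obtain ⟨c, hc, hcab⟩ := pick ((bs G a (2 * t)).1 ∪ (bs G b (2 * t)).1) (by
    have h1 := hb a
    have h2 := hb b
    have h3 : (((bs G a (2 * t)).1 ∪ (bs G b (2 * t)).1).card : ℝ)
        ≤ (bs G a (2 * t)).1.card + (bs G b (2 * t)).1.card := by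
      exact_mod_cast Finset.card_union_le _ _
    linarith)
  rw [Finset.mem_union, not_or] at hcab
  obtain ⟨e⟩ := three_far ht hC ha hbm hc hab hcab.1 hcab.2
  exact hfree.false e

theorem Chain.extend {V : Type*} [Fintype V] {G : SimpleGraph V} {u : V} {i : ℕ}
    {L : ℕ → Finset V} {U A : Finset V} (hC : Chain G u i L)
    (hU1 : ∀ v ∈ U, ∀ j ≤ i, v ∉ L j) (hU2 : ∀ v ∈ U, ∀ j < i, ∀ w ∈ L j, ¬ G.Adj w v)
    (hA : A ⊆ nbrS G (L i) ∩ U) (hind : ∀ a ∈ A, ∀ b ∈ A, ¬ G.Adj a b) :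
    Chain G u (i + 1) (Function.update L (i + 1) A) := by
  have hAU : ∀ v ∈ A, v ∈ U := fun v hv => (Finset.mem_inter.1 (hA hv)).2
  have hold : ∀ j, j ≤ i → Function.update L (i + 1) A j = L j := fun j hj =>
    Function.update_of_ne (by omega) _ _
  have hnew : Function.update L (i + 1) A (i + 1) = A := Function.update_self _ _ _
  have hcase : ∀ j, j ≤ i + 1 → j ≤ i ∨ j = i + 1 := fun j hj => by omega
  refine ⟨?_, ?_, ?_, ?_⟩
  · rw [hold 0 (by omega)]; exact hC.root
  · intro j hj v hv
    rw [hold j (by omega)]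
    by_cases h : j = i
    · subst h
      rw [hnew] at hv
      have := (Finset.mem_inter.1 (hA hv)).1
      rwa [mem_nbrS] at this
    · rw [hold (j + 1) (by omega)] at hv
      exact hC.par j (by omega) v hv
  · intro j hj k hk v hvj hvk
    rcases hcase j hj with h | rfl <;> rcases hcase k hk with h' | rfl
    · rw [hold _ h] at hvj
      rw [hold _ h'] at hvk
      exact hC.disj j h k h' v hvj hvk
    · rw [hold _ h] at hvj
      rw [hnew] at hvk
      exact absurd hvj (hU1 v (hAU v hvk) j h)
    · rw [hold _ h'] at hvk
      rw [hnew] at hvj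
      exact absurd hvk (hU1 v (hAU v hvj) k h')
    · rfl
  · intro j hj k hk v hv w hw hvw
    rcases hcase j hj with h | rfl <;> rcases hcase k hk with h' | rfl
    · rw [hold _ h] at hv
      rw [hold _ h'] at hw
      exact hC.adj j h k h' v hv w hw hvw
    · rw [hold _ h] at hv
      rw [hnew] at hw
      by_cases hji : j = i
      · left; omega
      · exact absurd hvw (hU2 w (hAU w hw) j (by omega) v hv)
    · rw [hold _ h'] at hw
      rw [hnew] at hv
      by_cases hki : k = i
      · right; omega
      · exact absurd hvw.symm (hU2 v (hAU v hv) k (by omega) w hw)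
    · rw [hnew] at hv hw
      exact absurd hvw (hind v hv w hw)

theorem inner {V : Type*} [Fintype V] {G : SimpleGraph V} {t Δ : ℕ} {lam : ℂ} {k : ℝ}
    (ht : 1 ≤ t) (hΔ : 3 ≤ Δ) (hk : k = (2 : ℝ) ^ ((Δ : ℝ) * (2 * vol Δ (2 * t))))
    (hpow : ∀ s : ℕ, 1 ≤ s → (s : ℝ) ≤ 2 * vol Δ (2 * t) → lam ^ s ∈ parabR k)
    (hfree : IsEmpty (subdividedClaw t ↪g G))
    (hdeg : ∀ v : V, (G.neighborSet v).ncard ≤ Δ) (u : V) (W : Finset V)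
    (hW : ∀ U, U ⊂ W → indepPolyOn G (fun _ => lam) U ≠ 0) (n : ℕ) :
    ∀ (i : ℕ) (L : ℕ → Finset V) (U : Finset V), U.card ≤ n → U ⊂ W → Chain G u i L →
      (∀ v ∈ U, ∀ j ≤ i, v ∉ L j) → (∀ v ∈ U, ∀ j < i, ∀ w ∈ L j, ¬ G.Adj w v) →
      1 / 2 ≤ (indepPolyOn G (fun _ => lam) U /
        indepPolyOn G (fun _ => lam) (U \ nbrS G (L i))).re := by
  have hk0 : 0 < k := by rw [hk]; positivity
  induction n with
  | zero =>
    intro i L U hn hUW hC h1 h2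
    have : U = ∅ := by simpa using hn
    subst this
    rw [Finset.empty_sdiff, div_self (hW _ hUW)]
    norm_num
  | succ n ih =>
    intro i L U hn hUW hC h1 h2
    have hT : nbrS G (L i) ∩ U ⊆ U := Finset.inter_subset_right
    have hUT : U \ (nbrS G (L i) ∩ U) = U \ nbrS G (L i) := by
      ext v; simp
    by_cases hTe : nbrS G (L i) ∩ U = ∅
    · rw [← hUT, hTe, Finset.sdiff_empty, div_self (hW _ hUW)]
      norm_num
    have hsplit := Z_split G lam U _ hT
    rw [hUT] at hsplit
    obtain ⟨T, hTdef⟩ : ∃ T, T = nbrS G (L i) ∩ U := ⟨_, rfl⟩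
    obtain ⟨U1, hU1def⟩ : ∃ U1, U1 = U \ nbrS G (L i) := ⟨_, rfl⟩
    rw [← hTdef] at hT hUT hTe hsplit
    rw [← hU1def] at hUT hsplit ⊢
    have hU1sub : U1 ⊆ U := by rw [hU1def]; exact Finset.sdiff_subset
    have hU1W : U1 ⊂ W := Finset.ssubset_of_subset_of_ssubset hU1sub hUW
    have hU1card : U1.card ≤ n := by
      have : U1.card < U.card := by
        apply Finset.card_lt_card
        rw [Finset.ssubset_iff_of_subset hU1sub]
        obtain ⟨v, hv⟩ := Finset.nonempty_iff_ne_empty.2 hTe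
        refine ⟨v, hT hv, ?_⟩
        rw [hTdef, Finset.mem_inter] at hv
        rw [hU1def, Finset.mem_sdiff]
        exact fun h => h.2 hv.1
      omega
    have hZ1 := hW U1 hU1W
    have hTcard : (2 : ℝ) ^ T.card ≤ k := by
      have e1 : T.card ≤ Δ * (L i).card := by
        rw [hTdef]
        exact (Finset.card_le_card Finset.inter_subset_left).trans (nbrS_card hdeg _)
      have e2 : (T.card : ℝ) ≤ Δ * (L i).card := by exact_mod_cast e1
      have e3 := level_card ht hΔ hC hfree hdeg
      rw [hk, ← Real.rpow_natCast]
      apply Real.rpow_le_rpow_of_exponent_le (by norm_num)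
      exact e2.trans (mul_le_mul_of_nonneg_left e3 (Nat.cast_nonneg _))
    have hterm : ∀ A ∈ T.powerset.erase ∅, -(1 / (2 * k)) ≤
        ((if (∀ u ∈ A, ∀ v ∈ A, ¬ G.Adj u v) then
          lam ^ A.card * indepPolyOn G (fun _ => lam) (U1 \ nbrS G A) else 0) /
          indepPolyOn G (fun _ => lam) U1).re := by
      intro A hA
      rw [Finset.mem_erase, Finset.mem_powerset] at hA
      obtain ⟨hAne, hAT⟩ := hA
      by_cases hind : ∀ u ∈ A, ∀ v ∈ A, ¬ G.Adj u v
      · rw [if_pos hind]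
        have hC' := hC.extend h1 h2 (by rw [← hTdef]; exact hAT) hind
        have hih := ih (i + 1) _ U1 hU1card hU1W hC' (by
            intro v hv j hj
            by_cases h : j = i + 1
            · subst h
              rw [Function.update_self]
              intro hvA
              have := hAT hvA
              rw [hTdef, Finset.mem_inter] at this
              rw [hU1def, Finset.mem_sdiff] at hv
              exact hv.2 this.1
            · rw [Function.update_of_ne h]
              exact h1 v (hU1sub hv) j (by omega)) (by
            intro v hv j hj
            rw [Function.update_of_ne (by omega)]
            by_cases h : j = i
            · subst h
              intro w hw hwv
              rw [hU1def, Finset.mem_sdiff, mem_nbrS] at hv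
              exact hv.2 ⟨w, hw, hwv⟩
            · exact h2 v (hU1sub hv) j (by omega))
        rw [Function.update_self] at hih
        have hcard := level_card ht hΔ hC' hfree hdeg
        rw [Function.update_self] at hcard
        have hA1 : 1 ≤ A.card := Finset.card_pos.2 (Finset.nonempty_iff_ne_empty.2 hAne)
        have hpar := parab_norm hk0 (hpow A.card hA1 hcard)
        have := re_mul_inv hpar hih
        rwa [inv_div, ← mul_div_assoc] at this
      · rw [if_neg hind, zero_div, Complex.zero_re]
        have : 0 < 1 / (2 * k) := by positivity
        linarith
    rw [hsplit, Finset.sum_div, ← Finset.add_sum_erase _ _ (Finset.empty_mem_powerset T),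
      Complex.add_re, Complex.re_sum]
    have hfirst : ((if (∀ u ∈ (∅ : Finset V), ∀ v ∈ (∅ : Finset V), ¬ G.Adj u v) then
          lam ^ (∅ : Finset V).card * indepPolyOn G (fun _ => lam) (U1 \ nbrS G ∅) else 0) /
          indepPolyOn G (fun _ => lam) U1).re = 1 := by
      rw [if_pos (by simp)]
      have : nbrS G (∅ : Finset V) = ∅ := by simp [nbrS]
      rw [this, Finset.sdiff_empty]
      simp [hZ1]
    rw [hfirst]
    have hsum := Finset.card_nsmul_le_sum _ _ _ hterm
    have hc : ((T.powerset.erase ∅).card : ℝ) ≤ k := by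
      refine le_trans ?_ hTcard
      have : (T.powerset.erase ∅).card ≤ 2 ^ T.card := by
        rw [← Finset.card_powerset]
        exact Finset.card_le_card (Finset.erase_subset _ _)
      exact_mod_cast this
    rw [nsmul_eq_mul] at hsum
    have hh : ((T.powerset.erase ∅).card : ℝ) * (1 / (2 * k)) ≤ k * (1 / (2 * k)) :=
      mul_le_mul_of_nonneg_right hc (by positivity)
    have hh2 : k * (1 / (2 * k)) = 1 / 2 := by field_simp
    linarith

theorem Z_ne_zero {V : Type*} [Fintype V] {G : SimpleGraph V} {t Δ : ℕ} {lam : ℂ} {k : ℝ}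
    (ht : 1 ≤ t) (hΔ : 3 ≤ Δ) (hk : k = (2 : ℝ) ^ ((Δ : ℝ) * (2 * vol Δ (2 * t))))
    (hpow : ∀ s : ℕ, 1 ≤ s → (s : ℝ) ≤ 2 * vol Δ (2 * t) → lam ^ s ∈ parabR k)
    (hfree : IsEmpty (subdividedClaw t ↪g G))
    (hdeg : ∀ v : V, (G.neighborSet v).ncard ≤ Δ) (W : Finset V) :
    indepPolyOn G (fun _ => lam) W ≠ 0 := by
  induction W using Finset.strongInduction with
  | H W ihW =>
    rcases Finset.eq_empty_or_nonempty W with rfl | ⟨u, hu⟩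
    · simp [indepPolyOn]
    have hC : Chain G u 0 (fun _ => {u}) := by
      refine ⟨rfl, fun j hj => by omega, fun j hj k hk v _ _ => by omega, ?_⟩
      intro j _ k _ v hv w hw h
      rw [Finset.mem_singleton] at hv hw
      subst hv hw
      exact absurd h (G.loopless.irrefl _)
    have hk1 : 1 ≤ k := by
      rw [hk]
      apply Real.one_le_rpow (by norm_num)
      have := (Nat.cast_nonneg _).trans (ball_card hΔ hdeg u (2 * t))
      positivity
    have hsub : W.erase u ⊂ W := Finset.erase_ssubset hu
    have hin := inner ht hΔ hk hpow hfree hdeg u W ihW (W.erase u).card 0 _ (W.erase u) le_rfl hsub hC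
      (by intro v hv j _ h
          rw [Finset.mem_singleton] at h
          subst h
          simp at hv) (by intro v _ j hj; omega)
    have hsplit := Z_split G lam W {u} (by simpa using hu)
    have he : W \ {u} = W.erase u := by ext v; simp; tauto
    rw [he] at hsplit
    have hpw : ({u} : Finset V).powerset = {∅, {u}} := by
      ext S; simp [Finset.subset_singleton_iff]
    have hnb : nbrS G (∅ : Finset V) = ∅ := by simp [nbrS]
    rw [hpw, Finset.sum_pair (by simp), if_pos (by simp), if_pos (by simp), hnb,
      Finset.sdiff_empty, Finset.card_empty, pow_zero, one_mul, Finset.card_singleton] at hsplit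
    have hZ := ihW _ hsub
    have hl1 := level_card ht hΔ hC hfree hdeg
    rw [Finset.card_singleton] at hl1
    have hpar := parab_norm (by linarith) (hpow 1 le_rfl hl1)
    have hre := re_mul_inv hpar hin
    rw [inv_div, ← mul_div_assoc] at hre
    intro h0
    rw [h0] at hsplit
    have : lam ^ 1 * indepPolyOn G (fun _ => lam) (W.erase u \ nbrS G {u}) /
        indepPolyOn G (fun _ => lam) (W.erase u) = -1 := by
      rw [div_eq_iff hZ]
      linear_combination -hsplit
    rw [this] at hre
    simp only [Complex.neg_re, Complex.one_re, neg_le_neg_iff] at hre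
    rw [le_div_iff₀ (by linarith)] at hre
    linarith

/-- with `r = 2·vol(Δ, 2t)`, if `λ ∈ ℂ` has `Re λ ≥ 0` and
`λ^s ∈ R(2^{Δr})` for every integer `1 ≤ s ≤ r`, then the univariate
independence polynomial of every finite `S_{t,t,t}`-free simple graph of
maximum degree at most `Δ` is nonzero at `λ`. -/
theorem stmt7 (t Δ : ℕ) (ht : 1 ≤ t) (hΔ : 3 ≤ Δ) (lam : ℂ)
    (hre : 0 ≤ lam.re)
    (hpow : ∀ s : ℕ, 1 ≤ s → (s : ℝ) ≤ 2 * vol Δ (2 * t) →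
      lam ^ s ∈ parabR ((2 : ℝ) ^ ((Δ : ℝ) * (2 * vol Δ (2 * t)))))
    {V : Type} [Fintype V] (G : SimpleGraph V)
    (hfree : IsEmpty (subdividedClaw t ↪g G))
    (hdeg : ∀ v : V, (G.neighborSet v).ncard ≤ Δ) :
    indepPoly G (fun _ => lam) ≠ 0 := by
  exact Z_ne_zero ht hΔ rfl hpow hfree hdeg Finset.univ
end

section
/- Let G be a finite claw-free simple graph each of whose connected components contains a simplicial clique, and let X ⊆ V(G). Then the induced subgraph G' = G[V(G) ∖ X] is also a claw-free graph each of whose connected components contains a simplicial clique. In other words, the class of claw-free graphs whose every connected component has a simplicial clique is hereditary. -/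
attribute [local instance] Classical.propDecidable

/-- `K` is a simplicial clique in `G`: `K` is a clique and, for every `v ∈ K`,
the neighbours of `v` outside `K` induce a clique. -/
def IsSimplicialClique {V : Type*} (G : SimpleGraph V) (K : Set V) : Prop :=
  G.IsClique K ∧ ∀ v ∈ K, G.IsClique {w : V | G.Adj v w ∧ w ∉ K}

/-- Every connected component of `G` contains a (nonempty) simplicial clique. -/
def EveryComponentHasSimplicialClique {V : Type*} (G : SimpleGraph V) : Prop :=
  ∀ c : G.ConnectedComponent, ∃ K : Set V, K.Nonempty ∧
    (∀ v ∈ K, G.connectedComponentMk v = c) ∧ IsSimplicialClique G K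

theorem claw_aux {V : Type} (G : SimpleGraph V)
    (hclaw : IsEmpty (subdividedClaw 1 ↪g G)) {v a b d : V}
    (ha : G.Adj v a) (hb : G.Adj v b) (hd : G.Adj v d)
    (hab : a ≠ b) (had : a ≠ d) (hbd : b ≠ d)
    (nab : ¬ G.Adj a b) (nad : ¬ G.Adj a d) : G.Adj b d := by
  by_contra nbd
  have nba : ¬ G.Adj b a := fun h => nab h.symm
  have nda : ¬ G.Adj d a := fun h => nad h.symm
  have ndb : ¬ G.Adj d b := fun h => nbd h.symm
  refine hclaw.false ⟨⟨fun x => x.elim v (fun p => ![a, b, d] p.1), ?_⟩, ?_⟩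
  · rintro (_ | ⟨i, j⟩) (_ | ⟨i', j'⟩) h
    · rfl
    · fin_cases i' <;> simp at h
      · exact absurd h ha.ne
      · exact absurd h hb.ne
      · exact absurd h hd.ne
    · fin_cases i <;> simp at h
      · exact absurd h.symm ha.ne
      · exact absurd h.symm hb.ne
      · exact absurd h.symm hd.ne
    · have hj : j = j' := Subsingleton.elim _ _
      subst hj
      fin_cases i <;> fin_cases i' <;> simp_all [eq_comm]
  · rintro (_ | ⟨i, j⟩) (_ | ⟨i', j'⟩)
    · simp
    · fin_cases i' <;> simp [subdividedClaw] <;> assumption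
    · fin_cases i <;> simp [subdividedClaw] <;>
        first | exact ha.symm | exact hb.symm | exact hd.symm
    · fin_cases i <;> fin_cases i' <;> simp [subdividedClaw] <;>
        first | assumption | exact G.irrefl

theorem walk_aux {V : Type} (G : SimpleGraph V) (K D : Set V) {u w : V} (p : G.Walk u w)
    (hw : w ∈ D) (hu : u ∉ D)
    (h : u ∈ K ∨ ∃ r, G.Adj u r ∧ r ∉ D ∧ ∀ x ∈ D, ¬ G.Adj r x) :
    ∃ q, q ∉ D ∧ (∃ x ∈ D, G.Adj q x) ∧
      (q ∈ K ∨ ∃ r, G.Adj q r ∧ r ∉ D ∧ ∀ x ∈ D, ¬ G.Adj r x) := by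
  induction p with
  | nil => exact absurd hw hu
  | @cons u u' w hadj p ih =>
    by_cases hx : ∃ x ∈ D, G.Adj u x
    · exact ⟨u, hu, hx, h⟩
    · push Not at hx
      exact ih hw (fun hD => hx _ hD hadj) (Or.inr ⟨u, hadj.symm, hu, hx⟩)

/-- the class of (finite) claw-free graphs whose every connected
component contains a simplicial clique is hereditary: deleting any set of
vertices `X` yields again a claw-free graph each of whose connected components
contains a simplicial clique. -/
theorem stmt8 {V : Type} [Fintype V] (G : SimpleGraph V)
    (hclaw : IsEmpty (subdividedClaw 1 ↪g G))
    (hsimp : EveryComponentHasSimplicialClique G)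
    (X : Set V) :
    IsEmpty (subdividedClaw 1 ↪g (G.induce Xᶜ)) ∧
    EveryComponentHasSimplicialClique (G.induce Xᶜ) := by
  refine ⟨⟨fun f => hclaw.false (f.trans (SimpleGraph.Embedding.induce _))⟩, ?_⟩
  intro c
  obtain ⟨v₀, hv₀⟩ := c.exists_rep
  obtain ⟨K, ⟨k, hk⟩, hKc, hKcl, hKs⟩ := hsimp (G.connectedComponentMk v₀.1)
  have step : ∀ {a b : ↥Xᶜ}, (G.induce Xᶜ).connectedComponentMk a = c → G.Adj a.1 b.1 →
      (G.induce Xᶜ).connectedComponentMk b = c := by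
    intro a b ha hab
    rw [← ha]
    have h' : (G.induce Xᶜ).Adj b a := hab.symm
    exact SimpleGraph.ConnectedComponent.sound h'.reachable
  by_cases hex : ∃ x : ↥Xᶜ, x.1 ∈ K ∧ (G.induce Xᶜ).connectedComponentMk x = c
  · obtain ⟨x, hxK, hxc⟩ := hex
    refine ⟨{y | y.1 ∈ K ∧ (G.induce Xᶜ).connectedComponentMk y = c}, ⟨x, hxK, hxc⟩,
      fun v hv => hv.2, ?_, ?_⟩
    · intro a ha b hb hab
      exact hKcl ha.1 hb.1 (fun h => hab (Subtype.ext h))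
    · rintro v ⟨hvK, hvc⟩ a ⟨hva, ha⟩ b ⟨hvb, hb⟩ hab
      have hva' : G.Adj v.1 a.1 := hva
      have hvb' : G.Adj v.1 b.1 := hvb
      exact hKs v.1 hvK ⟨hva', fun h => ha ⟨h, step hvc hva'⟩⟩
        ⟨hvb', fun h => hb ⟨h, step hvc hvb'⟩⟩ (fun h => hab (Subtype.ext h))
  · let D : Set V := {x | ∃ h : x ∈ Xᶜ, (G.induce Xᶜ).connectedComponentMk ⟨x, h⟩ = c}
    have hDK : ∀ x ∈ D, x ∉ K := fun x ⟨h, hx⟩ hK => hex ⟨⟨x, h⟩, hK, hx⟩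
    obtain ⟨p⟩ := SimpleGraph.ConnectedComponent.exact (hKc k hk)
    obtain ⟨q, hqD, ⟨x, hxD, hqx⟩, hq⟩ := walk_aux G K D p ⟨v₀.2, hv₀⟩
      (fun h => hDK k h hk) (Or.inl hk)
    have hmem : ∀ a : ↥Xᶜ, (G.induce Xᶜ).connectedComponentMk a = c → a.1 ∈ D :=
      fun a ha => ⟨a.2, ha⟩
    refine ⟨{y | (G.induce Xᶜ).connectedComponentMk y = c ∧ G.Adj q y.1},
      ⟨⟨x, hxD.1⟩, hxD.2, hqx⟩, fun v hv => hv.1, ?_, ?_⟩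
    · rintro a ⟨hac, hqa⟩ b ⟨hbc, hqb⟩ hab
      have hab' : a.1 ≠ b.1 := fun h => hab (Subtype.ext h)
      show G.Adj a.1 b.1
      rcases hq with hqK | ⟨r, hqr, hrD, hr⟩
      · exact hKs q hqK ⟨hqa, hDK _ (hmem a hac)⟩ ⟨hqb, hDK _ (hmem b hbc)⟩ hab'
      · exact claw_aux G hclaw hqr hqa hqb (fun h => hrD (h ▸ hmem a hac))
          (fun h => hrD (h ▸ hmem b hbc)) hab' (hr _ (hmem a hac)) (hr _ (hmem b hbc))
    · rintro v ⟨hvc, hqv⟩ a ⟨hva, ha⟩ b ⟨hvb, hb⟩ hab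
      have hva' : G.Adj v.1 a.1 := hva
      have hvb' : G.Adj v.1 b.1 := hvb
      have hac := step hvc hva'
      have hbc := step hvc hvb'
      exact claw_aux G hclaw hqv.symm hva' hvb' (fun h => hqD (h ▸ hmem a hac))
        (fun h => hqD (h ▸ hmem b hbc)) (fun h => hab (Subtype.ext h))
        (fun h => ha ⟨hac, h⟩) (fun h => hb ⟨hbc, h⟩)
end

section
/- Let s ≥ 2 and n ≥ 1 be integers. For every assignment of weights λ = (λ_{ij})_{(i,j) ∈ [2n]×[s]} to the vertices of the blown-up cycle C_{2n}[K_s] with λ_{ij} ∈ R(s) for all (i,j), the multivariate independence polynomial satisfies Z_{C_{2n}[K_s],λ} ≠ 0. -/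
attribute [local instance] Classical.propDecidable

/-- The blown-up cycle `C_m[K_s]`: vertex set `[m] × [s]`; `(i,j)` and `(i',j')`
are adjacent iff `i = i'` and `j ≠ j'`, or `i' − i ≡ ±1 (mod m)`. -/
def blowCyc (m s : ℕ) : SimpleGraph (Fin m × Fin s) :=
  SimpleGraph.fromRel (fun a b =>
    (a.1 = b.1 ∧ a.2 ≠ b.2) ∨ ((a.1 : ℕ) + 1) % m = (b.1 : ℕ))


lemma indepPolyOn_insert {V : Type*} [Fintype V] (G : SimpleGraph V) (lam : V → ℂ)
    (v : V) (W : Finset V) (hv : v ∉ W) :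
    indepPolyOn G lam (insert v W) =
      indepPolyOn G lam W + lam v * indepPolyOn G lam (W.filter (fun u => ¬ G.Adj v u)) := by
  unfold indepPolyOn
  rw [Finset.sum_powerset_insert hv]
  congr 1
  rw [Finset.mul_sum]
  symm
  have hsub : (W.filter (fun u => ¬ G.Adj v u)).powerset ⊆ W.powerset :=
    Finset.powerset_mono.2 (Finset.filter_subset _ _)
  have h0 : ∀ t ∈ W.powerset, t ∉ (W.filter (fun u => ¬ G.Adj v u)).powerset →
      (if (∀ u ∈ insert v t, ∀ w ∈ insert v t, ¬ G.Adj u w) then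
        ∏ u ∈ insert v t, lam u else 0) = 0 := by
    intro t ht hnt
    rw [if_neg]
    intro hI
    apply hnt
    rw [Finset.mem_powerset] at ht ⊢
    intro u hu
    rw [Finset.mem_filter]
    exact ⟨ht hu, hI v (Finset.mem_insert_self _ _) u (Finset.mem_insert_of_mem hu)⟩
  rw [← Finset.sum_subset hsub h0]
  refine Finset.sum_congr rfl ?_
  intro t ht
  rw [Finset.mem_powerset] at ht
  have hvt : v ∉ t := fun h => hv (Finset.mem_filter.1 (ht h)).1
  have hiff : (∀ u ∈ insert v t, ∀ w ∈ insert v t, ¬ G.Adj u w) ↔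
      (∀ u ∈ t, ∀ w ∈ t, ¬ G.Adj u w) := by
    constructor
    · intro h u hu w hw
      exact h u (Finset.mem_insert_of_mem hu) w (Finset.mem_insert_of_mem hw)
    · intro h u hu w hw
      rcases Finset.mem_insert.1 hu with rfl | hu'
      · rcases Finset.mem_insert.1 hw with rfl | hw'
        · exact G.irrefl
        · exact (Finset.mem_filter.1 (ht hw')).2
      · rcases Finset.mem_insert.1 hw with rfl | hw'
        · exact fun hh => (Finset.mem_filter.1 (ht hu')).2 hh.symm
        · exact h u hu' w hw'
  by_cases hI : (∀ u ∈ t, ∀ w ∈ t, ¬ G.Adj u w)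
  · rw [if_pos hI, if_pos (hiff.2 hI), Finset.prod_insert hvt]
  · rw [if_neg hI, if_neg (fun h => hI (hiff.1 h)), mul_zero]

lemma indepPolyOn_clique {V : Type*} [Fintype V] (G : SimpleGraph V) (lam : V → ℂ)
    (W₀ W₁ : Finset V) (K : Finset V) :
    (∀ v ∈ K, v ∉ W₀) → (∀ v ∈ K, ∀ u ∈ K, u ≠ v → G.Adj v u) →
    (∀ v ∈ K, W₀.filter (fun u => ¬ G.Adj v u) = W₁) →
    indepPolyOn G lam (K ∪ W₀) =
      indepPolyOn G lam W₀ + (∑ v ∈ K, lam v) * indepPolyOn G lam W₁ := by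
  induction K using Finset.induction_on with
  | empty => intro _ _ _; simp
  | insert v K hvK ih =>
    intro h1 h2 h3
    have ih' := ih (fun u hu => h1 u (Finset.mem_insert_of_mem hu))
      (fun u hu w hw => h2 u (Finset.mem_insert_of_mem hu) w (Finset.mem_insert_of_mem hw))
      (fun u hu => h3 u (Finset.mem_insert_of_mem hu))
    have hv0 : v ∉ K ∪ W₀ := by
      rw [Finset.mem_union]
      rintro (h | h)
      · exact hvK h
      · exact h1 v (Finset.mem_insert_self _ _) h
    have hf : (K ∪ W₀).filter (fun u => ¬ G.Adj v u) = W₁ := by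
      rw [← h3 v (Finset.mem_insert_self _ _), Finset.filter_union]
      rw [Finset.filter_eq_empty_iff.2, Finset.empty_union]
      intro u hu
      rw [not_not]
      refine h2 v (Finset.mem_insert_self _ _) u (Finset.mem_insert_of_mem hu) ?_
      rintro rfl
      exact hvK hu
    rw [Finset.insert_union, indepPolyOn_insert G lam v _ hv0, hf, ih', Finset.sum_insert hvK]
    ring

lemma indepPolyOn_clique' {V : Type*} [Fintype V] (G : SimpleGraph V) (lam : V → ℂ)
    (W W₀ W₁ : Finset V) (K : Finset V) (hW : ∀ v, v ∈ W ↔ v ∈ K ∨ v ∈ W₀)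
    (h1 : ∀ v ∈ K, v ∉ W₀) (h2 : ∀ v ∈ K, ∀ u ∈ K, u ≠ v → G.Adj v u)
    (h3 : ∀ v ∈ K, W₀.filter (fun u => ¬ G.Adj v u) = W₁) :
    indepPolyOn G lam W =
      indepPolyOn G lam W₀ + (∑ v ∈ K, lam v) * indepPolyOn G lam W₁ := by
  rw [← indepPolyOn_clique G lam W₀ W₁ K h1 h2 h3]
  congr 1
  ext v
  rw [hW, Finset.mem_union]

/-- Layers `a, …, b-1`. -/
noncomputable def layers (m s a b : ℕ) : Finset (Fin m × Fin s) :=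
  Finset.univ.filter (fun v => a ≤ (v.1 : ℕ) ∧ (v.1 : ℕ) < b)

lemma mem_layers {m s a b : ℕ} (v : Fin m × Fin s) :
    v ∈ layers m s a b ↔ a ≤ (v.1 : ℕ) ∧ (v.1 : ℕ) < b := by
  simp [layers]

lemma adj_iff {m s : ℕ} (hm : 2 ≤ m) (u v : Fin m × Fin s) :
    (blowCyc m s).Adj u v ↔ ((u.1 : ℕ) = v.1 ∧ u ≠ v) ∨ (u.1 : ℕ) + 1 = v.1 ∨
      (v.1 : ℕ) + 1 = u.1 ∨ ((u.1 : ℕ) = 0 ∧ (v.1 : ℕ) + 1 = m) ∨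
      ((v.1 : ℕ) = 0 ∧ (u.1 : ℕ) + 1 = m) := by
  obtain ⟨⟨i, hi⟩, j⟩ := u
  obtain ⟨⟨k, hk⟩, l⟩ := v
  have key : ∀ a b : ℕ, a < m → b < m → ((a + 1) % m = b ↔ a + 1 = b ∨ (a + 1 = m ∧ b = 0)) := by
    intro a b ha hb
    rcases Nat.lt_or_ge (a + 1) m with h | h
    · rw [Nat.mod_eq_of_lt h]; omega
    · have : a + 1 = m := by omega
      rw [this, Nat.mod_self]; omega
  simp only [blowCyc, SimpleGraph.fromRel_adj, key i k hi hk, key k i hk hi, ne_eq, Prod.mk.injEq,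
    Fin.mk.injEq]
  have := @eq_comm _ j l
  by_cases hjl : j = l
  · simp only [hjl]
    grind
  · have hlj : ¬ l = j := fun h => hjl h.symm
    simp only [hjl, hlj]
    grind

/-- Path recursion. -/
lemma path_rec {m s : ℕ} (hm : 2 ≤ m) (lam : Fin m × Fin s → ℂ) (a k : ℕ) (ha : 1 ≤ a)
    (hak : a ≤ k) :
    indepPolyOn (blowCyc m s) lam (layers m s a (k + 1)) =
      indepPolyOn (blowCyc m s) lam (layers m s a k) +
      (∑ v ∈ layers m s k (k + 1), lam v) *
        indepPolyOn (blowCyc m s) lam (layers m s a (k - 1)) := by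
  apply indepPolyOn_clique'
  · intro v
    simp only [mem_layers]
    omega
  · intro v hv
    rw [mem_layers] at *
    omega
  · intro v hv u hu huv
    rw [mem_layers] at *
    rw [adj_iff hm]
    exact Or.inl ⟨by omega, huv.symm⟩
  · intro v hv
    ext u
    rw [Finset.mem_filter, adj_iff hm]
    simp only [mem_layers] at *
    have := v.1.2
    have := u.1.2
    constructor
    · rintro ⟨h1, h2⟩
      push Not at h2
      omega
    · intro h
      refine ⟨by omega, ?_⟩
      omega

lemma cycle_rec {m s : ℕ} (hm : 2 ≤ m) (lam : Fin m × Fin s → ℂ) :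
    indepPoly (blowCyc m s) lam =
      indepPolyOn (blowCyc m s) lam (layers m s 1 m) +
      (∑ v ∈ layers m s 0 (0 + 1), lam v) *
        indepPolyOn (blowCyc m s) lam (layers m s 2 (m - 1)) := by
  rw [indepPoly]
  apply indepPolyOn_clique'
  · intro v
    have := v.1.2
    simp only [mem_layers, Finset.mem_univ, true_iff]
    omega
  · intro v hv
    rw [mem_layers] at *
    omega
  · intro v hv u hu huv
    rw [mem_layers] at *
    rw [adj_iff hm]
    exact Or.inl ⟨by omega, huv.symm⟩
  · intro v hv
    ext u
    rw [Finset.mem_filter, adj_iff hm]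
    simp only [mem_layers] at *
    have := v.1.2
    have := u.1.2
    constructor
    · rintro ⟨h1, h2⟩
      push Not at h2
      omega
    · intro h
      refine ⟨by omega, ?_⟩
      omega

lemma path_empty {m s : ℕ} (lam : Fin m × Fin s → ℂ) (a b : ℕ) (h : b ≤ a) :
    indepPolyOn (blowCyc m s) lam (layers m s a b) = 1 := by
  have : layers m s a b = ∅ := by
    ext v
    simp only [mem_layers, Finset.notMem_empty, iff_false]
    omega
  rw [this]
  simp [indepPolyOn]

/-- The transfer iteration. -/
noncomputable def tseq (X : ℕ → ℂ) (p q : ℂ) : ℕ → ℂ × ℂ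
  | 0 => (p, q)
  | k + 1 => ((tseq X p q k).1 + X k * (tseq X p q k).2, (tseq X p q k).1)

lemma tseq_lin (X : ℕ → ℂ) (p q : ℂ) (k : ℕ) :
    (tseq X p q k).1 = p * (tseq X 1 0 k).1 + q * (tseq X 0 1 k).1 ∧
    (tseq X p q k).2 = p * (tseq X 1 0 k).2 + q * (tseq X 0 1 k).2 := by
  induction k with
  | zero => simp [tseq]
  | succ k ih =>
    simp only [tseq]
    rw [ih.1, ih.2]
    constructor <;> ring

lemma norm_lt_of_parab {k : ℝ} (hk : 0 < k) {z : ℂ} (hz : z ∈ parabR k) :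
    ‖z‖ < z.re + 1 / (2 * k) := by
  have hz' : z.im ^ 2 < z.re / k + 1 / (4 * k ^ 2) := hz
  have h1 : (z.re + 1 / (2 * k)) ^ 2 = z.re ^ 2 + (z.re / k + 1 / (4 * k ^ 2)) := by
    field_simp
    ring
  have h2 : 0 < z.re + 1 / (2 * k) := by
    have h3 : 0 < z.re / k + 1 / (4 * k ^ 2) := lt_of_le_of_lt (sq_nonneg _) hz'
    have h4 : z.re / k + 1 / (4 * k ^ 2) = (z.re + 1 / (4 * k)) / k := by
      field_simp
    rw [h4] at h3
    have h5 : 0 < z.re + 1 / (4 * k) := by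
      by_contra hcon
      exact absurd h3 (not_lt.2 (div_nonpos_of_nonpos_of_nonneg (not_lt.1 hcon) hk.le))
    have h6 : 1 / (4 * k) ≤ 1 / (2 * k) := by
      apply one_div_le_one_div_of_le <;> linarith
    linarith
  apply lt_of_pow_lt_pow_left₀ 2 h2.le
  rw [h1, Complex.sq_norm, Complex.normSq_apply]
  nlinarith

lemma cone_step {x p q : ℂ} (hx : ‖x‖ < x.re + 1 / 2) (hq : q ≠ 0) (h : 1 / 2 ≤ (p / q).re) :
    p ≠ 0 ∧ 1 / 2 < ((p + x * q) / p).re := by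
  have hp : p ≠ 0 := by
    rintro rfl
    simp at h
    linarith
  refine ⟨hp, ?_⟩
  obtain ⟨r, hr⟩ : ∃ r, r = p / q := ⟨_, rfl⟩
  rw [← hr] at h
  have hr0 : r ≠ 0 := by rw [hr]; exact div_ne_zero hp hq
  have he : (p + x * q) / p = 1 + x + x * (r⁻¹ - 1) := by
    rw [hr]; field_simp; ring
  have hn : ‖r⁻¹ - 1‖ ≤ 1 := by
    have : r⁻¹ - 1 = (1 - r) / r := by field_simp
    rw [this, norm_div, div_le_one (norm_pos_iff.2 hr0)]
    refine le_of_sq_le_sq ?_ (norm_nonneg _)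
    rw [Complex.sq_norm, Complex.sq_norm, Complex.normSq_apply, Complex.normSq_apply]
    simp
    nlinarith
  have hb : ‖x * (r⁻¹ - 1)‖ ≤ ‖x‖ := by
    rw [norm_mul]
    exact mul_le_of_le_one_right (norm_nonneg _) hn
  have hre := Complex.abs_re_le_norm (x * (r⁻¹ - 1))
  have := neg_abs_le (x * (r⁻¹ - 1)).re
  rw [he, Complex.add_re, Complex.add_re, Complex.one_re]
  linarith

lemma tseq_cone (X : ℕ → ℂ) (hX : ∀ k, ‖X k‖ < (X k).re + 1 / 2) (p q : ℂ) (hq : q ≠ 0)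
    (h : 1 / 2 ≤ (p / q).re) (k : ℕ) :
    (tseq X p q (k + 1)).2 ≠ 0 ∧
      1 / 2 < ((tseq X p q (k + 1)).1 / (tseq X p q (k + 1)).2).re := by
  induction k with
  | zero => exact cone_step (hX 0) hq h
  | succ k ih => exact cone_step (hX (k + 1)) ih.1 ih.2.le

lemma trace_ne (X : ℕ → ℂ) (hX : ∀ k, ‖X k‖ < (X k).re + 1 / 2) (k : ℕ) :
    (tseq X 1 0 (k + 1)).1 + (tseq X 0 1 (k + 1)).2 ≠ 0 := by
  intro h0
  have h1 := tseq_cone X hX (1 / 2) 1 one_ne_zero (by norm_num) k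
  have h2 := tseq_cone X hX _ _ h1.1 h1.2.le k
  have l1 := tseq_lin X (1 / 2) 1 (k + 1)
  have l2 := tseq_lin X (tseq X (1 / 2) 1 (k + 1)).1 (tseq X (1 / 2) 1 (k + 1)).2 (k + 1)
  rw [l2.1, l2.2, l1.1, l1.2] at h2
  generalize (tseq X 1 0 (k + 1)).1 = a at *
  generalize (tseq X 0 1 (k + 1)).1 = b at *
  generalize (tseq X 1 0 (k + 1)).2 = c at *
  generalize (tseq X 0 1 (k + 1)).2 = d at *
  have hd : d = -a := by linear_combination h0
  subst hd
  obtain ⟨h3, h4⟩ := h2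
  have e2 : (1 / 2 * a + 1 * b) * c + (1 / 2 * c + 1 * -a) * -a = a * a + b * c := by ring
  have e1 : (1 / 2 * a + 1 * b) * a + (1 / 2 * c + 1 * -a) * b = (1 / 2) * (a * a + b * c) := by
    ring
  rw [e2] at h3 h4
  rw [e1, mul_div_assoc, div_self h3] at h4
  norm_num at h4

lemma layer_bound {m s : ℕ} (hs : 1 ≤ s) (lam : Fin m × Fin s → ℂ)
    (hlam : ∀ v, lam v ∈ parabR s) (k : ℕ) :
    ‖∑ v ∈ layers m s k (k + 1), lam v‖ <
      (∑ v ∈ layers m s k (k + 1), lam v).re + 1 / 2 := by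
  have hs0 : (0 : ℝ) < s := by exact_mod_cast hs
  have hcard : (layers m s k (k + 1)).card ≤ s := by
    have := Finset.card_le_card_of_injOn (s := layers m s k (k + 1))
      (t := (Finset.univ : Finset (Fin s))) Prod.snd (fun _ _ => Finset.mem_univ _) (by
        intro u hu v hv huv
        have hu' := (mem_layers u).1 hu
        have hv' := (mem_layers v).1 hv
        exact Prod.ext (Fin.ext (by omega)) huv)
    simpa using this
  rcases (layers m s k (k + 1)).eq_empty_or_nonempty with h | h
  · rw [h]; simp
  · have h1 := norm_sum_le (layers m s k (k + 1)) lam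
    have h2 : ∑ v ∈ layers m s k (k + 1), ‖lam v‖ <
        ∑ v ∈ layers m s k (k + 1), ((lam v).re + 1 / (2 * (s : ℝ))) :=
      Finset.sum_lt_sum_of_nonempty h (fun v _ => norm_lt_of_parab hs0 (hlam v))
    rw [Finset.sum_add_distrib, Finset.sum_const, nsmul_eq_mul] at h2
    have h3 : ((layers m s k (k + 1)).card : ℝ) * (1 / (2 * (s : ℝ))) ≤ 1 / 2 := by
      have : ((layers m s k (k + 1)).card : ℝ) ≤ s := by exact_mod_cast hcard
      calc ((layers m s k (k + 1)).card : ℝ) * (1 / (2 * (s : ℝ))) ≤ s * (1 / (2 * (s : ℝ))) := by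
            gcongr
        _ = 1 / 2 := by field_simp
    rw [Complex.re_sum]
    linarith

lemma tseq_one {m s : ℕ} (hm : 2 ≤ m) (lam : Fin m × Fin s → ℂ) (k : ℕ) :
    tseq (fun k => ∑ v ∈ layers m s k (k + 1), lam v) 1 0 (k + 1) =
      (indepPolyOn (blowCyc m s) lam (layers m s 1 (k + 1)),
        indepPolyOn (blowCyc m s) lam (layers m s 1 k)) := by
  induction k with
  | zero =>
    rw [path_empty lam 1 (0 + 1) (by omega), path_empty lam 1 0 (by omega)]
    simp [tseq]
  | succ k ih =>
    rw [tseq, ih, path_rec hm lam 1 (k + 1) (by omega) (by omega)]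
    simp

lemma tseq_two {m s : ℕ} (hm : 2 ≤ m) (lam : Fin m × Fin s → ℂ) (k : ℕ) :
    tseq (fun k => ∑ v ∈ layers m s k (k + 1), lam v) 0 1 (k + 2) =
      ((∑ v ∈ layers m s 0 (0 + 1), lam v) *
        indepPolyOn (blowCyc m s) lam (layers m s 2 (k + 2)),
       (∑ v ∈ layers m s 0 (0 + 1), lam v) *
        indepPolyOn (blowCyc m s) lam (layers m s 2 (k + 1))) := by
  induction k with
  | zero =>
    rw [path_empty lam 2 (0 + 2) (by omega), path_empty lam 2 (0 + 1) (by omega)]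
    simp [tseq]
  | succ k ih =>
    rw [tseq, ih, path_rec hm lam 2 (k + 2) (by omega) (by omega)]
    simp only [Prod.mk.injEq]
    refine ⟨?_, trivial⟩
    have : k + 2 - 1 = k + 1 := by omega
    rw [this]
    ring

/-- `R(s)` is a multivariate zero-free region for the blown-up
cycle `C_{2n}[K_s]`. -/
theorem stmt11 (s n : ℕ) (hs : 2 ≤ s) (hn : 1 ≤ n)
    (lam : Fin (2 * n) × Fin s → ℂ) (hlam : ∀ v, lam v ∈ parabR s) :
    indepPoly (blowCyc (2 * n) s) lam ≠ 0 := by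
  have hm : 2 ≤ 2 * n := by omega
  rw [cycle_rec hm lam]
  have h := trace_ne (fun k => ∑ v ∈ layers (2 * n) s k (k + 1), lam v)
    (layer_bound (by omega) lam hlam) (2 * n - 2 + 1)
  rw [tseq_one hm lam, tseq_two hm lam] at h
  have e1 : 2 * n - 2 + 1 + 1 = 2 * n := by omega
  have e2 : 2 * n - 2 + 1 = 2 * n - 1 := by omega
  rw [e1, e2] at h
  exact h
end

section
/- There is no open set S ⊆ ℂ containing the entire ray [0, ∞) that is a multivariate zero-free region for the family {C_{2n}[2K₁] : n ≥ 1}. That is, for every open S ⊆ ℂ with [0, ∞) ⊆ S, there exist a positive integer n and a weighting λ : [2n]×[2] → S of the vertices of C_{2n}[2K₁] such that Z_{C_{2n}[2K₁],λ} = 0. -/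
attribute [local instance] Classical.propDecidable

/-- The sparse blown-up cycle `C_m[2K₁]`: vertex set `[m] × [2]`; `(i,j)` and
`(i',j')` are adjacent iff `i' − i ≡ ±1 (mod m)` (no edges within a column). -/
def blowCyc2 (m : ℕ) : SimpleGraph (Fin m × Fin 2) :=
  SimpleGraph.fromRel (fun a b => ((a.1 : ℕ) + 1) % m = (b.1 : ℕ))

section helpers

open Finset

/-- product of the first `k` matrices of a sequence -/
noncomputable def matP {σ : Type} [Fintype σ] [DecidableEq σ] (M : ℕ → Matrix σ σ ℂ) :
    ℕ → Matrix σ σ ℂ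
  | 0 => 1
  | (k+1) => matP M k * M k

lemma matP_sum {σ : Type} [Fintype σ] [DecidableEq σ] (M : ℕ → Matrix σ σ ℂ) (k : ℕ) :
    ∀ h : σ → σ → ℂ, ∑ x, ∑ y, matP M k x y * h x y =
      ∑ f : Fin (k+1) → σ, (∏ i : Fin k, M i (f i.castSucc) (f i.succ)) *
        h (f 0) (f (Fin.last k)) := by
  induction k with
  | zero =>
    intro h
    rw [← (Equiv.funUnique (Fin 1) σ).symm.sum_comp]
    simp [matP, Matrix.one_apply]
  | succ k ih =>
    intro h
    rw [← (Fin.snocEquiv (fun _ : Fin (k+2) => σ)).sum_comp, Fintype.sum_prod_type]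
    have h1 := ih (fun x z => ∑ y, M k z y * h x y)
    have h2 : ∀ f : Fin (k+1) → σ, ∀ y : σ,
        (∏ i : Fin (k+1), M i ((Fin.snocEquiv (fun _ : Fin (k+2) => σ)) (y, f) i.castSucc)
          ((Fin.snocEquiv (fun _ : Fin (k+2) => σ)) (y, f) i.succ)) *
        h ((Fin.snocEquiv (fun _ : Fin (k+2) => σ)) (y, f) 0)
          ((Fin.snocEquiv (fun _ : Fin (k+2) => σ)) (y, f) (Fin.last (k+1)))
        = (∏ i : Fin k, M i (f i.castSucc) (f i.succ)) *
          (M k (f (Fin.last k)) y * h (f 0) y) := by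
      intro f y
      have e0 : (Fin.snoc f y : Fin (k+2) → σ) 0 = f 0 :=
        Fin.snoc_castSucc (α := fun _ => σ) y f 0
      have es : ∀ i : Fin k, (Fin.snoc f y : Fin (k+2) → σ) i.castSucc.succ = f i.succ := by
        intro i
        rw [Fin.succ_castSucc]
        exact Fin.snoc_castSucc (α := fun _ => σ) y f i.succ
      rw [Fin.prod_univ_castSucc]
      simp only [Fin.snocEquiv_apply, Fin.snoc_castSucc, Fin.succ_last, Fin.snoc_last, es, e0,
        Fin.val_last, Fin.val_castSucc]
      ring
    refine Eq.trans ?_ Finset.sum_comm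
    refine Eq.trans ?_ (Finset.sum_congr rfl fun f _ =>
      Finset.sum_congr rfl fun y _ => (h2 f y).symm)
    simp only [← Finset.mul_sum]
    rw [← h1]
    refine Finset.sum_congr rfl fun x _ => ?_
    have hm : ∀ y, matP M (k+1) x y = ∑ z, matP M k x z * M k z y := fun y => rfl
    simp only [hm, Finset.sum_mul, Finset.mul_sum]
    rw [Finset.sum_comm]
    refine Finset.sum_congr rfl fun z _ => Finset.sum_congr rfl fun y _ => ?_
    ring

lemma matP_trace {σ : Type} [Fintype σ] [DecidableEq σ] (M : ℕ → Matrix σ σ ℂ) (k : ℕ) :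
    (matP M (k+1)).trace = ∑ f : Fin (k+1) → σ, ∏ i : Fin (k+1), M i (f i) (f (i+1)) := by
  have := matP_sum M k (fun x y => M k y x)
  simp only [Matrix.trace, Matrix.diag, matP, Matrix.mul_apply]
  rw [this]
  refine Finset.sum_congr rfl fun f _ => ?_
  rw [Fin.prod_univ_castSucc]
  simp

/-- sets of vertices as column patterns -/
def colEquiv (m : ℕ) : Finset (Fin m × Fin 2) ≃ (Fin m → Finset (Fin 2)) where
  toFun S i := Finset.univ.filter (fun j => (i, j) ∈ S)
  invFun f := Finset.univ.filter (fun p => p.2 ∈ f p.1)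
  left_inv S := by ext ⟨i, j⟩; simp
  right_inv f := by ext i j; simp

/-- compatibility -/
noncomputable def colM (L : ℕ → Fin 2 → ℂ) (i : ℕ) : Matrix (Finset (Fin 2)) (Finset (Fin 2)) ℂ :=
  fun x y => (∏ j ∈ x, L i j) * (if x = ∅ ∨ y = ∅ then 1 else 0)

lemma indep_iff (k : ℕ) (hk : 1 ≤ k) (f : Fin (k+1) → Finset (Fin 2)) :
    (∀ u ∈ (colEquiv (k+1)).symm f, ∀ v ∈ (colEquiv (k+1)).symm f, ¬ (blowCyc2 (k+1)).Adj u v) ↔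
      ∀ i, f i = ∅ ∨ f (i+1) = ∅ := by
  have key : ∀ a b : Fin (k+1), ((a : ℕ) + 1) % (k+1) = (b : ℕ) ↔ b = a + 1 := by
    intro a b
    rw [Fin.ext_iff, Fin.val_add]
    have : ((1 : Fin (k+1)) : ℕ) = 1 := by
      rw [Fin.val_one']; exact Nat.mod_eq_of_lt (by omega)
    rw [this, eq_comm]
  have hne : ∀ a : Fin (k+1), a ≠ a + 1 := by
    intro a h
    have := (key a a).2 h
    have h2 := a.2
    by_cases h3 : (a : ℕ) + 1 < k + 1
    · rw [Nat.mod_eq_of_lt h3] at this; omega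
    · have : (a : ℕ) + 1 = k + 1 := by omega
      simp_all
      omega
  simp only [blowCyc2, SimpleGraph.fromRel_adj, key, colEquiv, Equiv.coe_fn_symm_mk, mem_filter,
    mem_univ, true_and]
  constructor
  · intro h i
    by_contra! hc
    obtain ⟨⟨j, hj⟩, ⟨j', hj'⟩⟩ := hc
    refine h (i, j) hj (i+1, j') hj' ⟨?_, Or.inl rfl⟩
    intro he
    exact hne i (congrArg Prod.fst he)
  · rintro h ⟨i, j⟩ hu ⟨i', j'⟩ hv ⟨_, h1 | h1⟩
    · simp only at h1 hu hv
      subst h1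
      rcases h i with h | h <;> simp [h] at hu hv
    · simp only at h1 hu hv
      subst h1
      rcases h i' with h | h <;> simp [h] at hu hv

lemma indepPoly_eq_trace (k : ℕ) (hk : 1 ≤ k) (L : ℕ → Fin 2 → ℂ) :
    indepPoly (blowCyc2 (k+1)) (fun v => L v.1 v.2) = (matP (colM L) (k+1)).trace := by
  rw [matP_trace, indepPoly, indepPolyOn, Finset.powerset_univ, ← (colEquiv (k+1)).symm.sum_comp]
  refine Finset.sum_congr rfl fun f _ => ?_
  simp only [indep_iff k hk f, colM, Finset.prod_mul_distrib]
  have h1 : ∏ v ∈ (colEquiv (k+1)).symm f, L v.1 v.2 = ∏ i : Fin (k+1), ∏ j ∈ f i, L i j := by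
    simp only [colEquiv, Equiv.coe_fn_symm_mk]
    rw [Finset.prod_filter, Fintype.prod_prod_type]
    refine Finset.prod_congr rfl fun i _ => ?_
    rw [← Finset.prod_filter]
    simp
  rw [h1]
  split_ifs with h
  · have : ∏ i : Fin (k+1), (if f i = ∅ ∨ f (i+1) = ∅ then (1:ℂ) else 0) = 1 :=
      Finset.prod_eq_one fun i _ => if_pos (h i)
    rw [this, mul_one]
  · push Not at h
    obtain ⟨i, hi⟩ := h
    rw [Finset.prod_eq_zero (s := Finset.univ) (f := fun i => if f i = ∅ ∨ f (i+1) = ∅ then (1:ℂ) else 0)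
      (Finset.mem_univ i), mul_zero]
    rw [if_neg]
    push Not
    simpa using hi

lemma matP_pow {σ : Type} [Fintype σ] [DecidableEq σ] (M : ℕ → Matrix σ σ ℂ)
    (h0 : ∀ i, M (2*i) = M 0) (h1 : ∀ i, M (2*i+1) = M 1) (n : ℕ) :
    matP M (2*n) = (M 0 * M 1)^n := by
  induction n with
  | zero => simp [matP]
  | succ n ih =>
    rw [show 2*(n+1) = 2*n+1+1 by ring, matP, matP, ih, h0, h1, pow_succ, Matrix.mul_assoc]

lemma trace_pow_swap {σ τ : Type} [Fintype σ] [DecidableEq σ] [Fintype τ] [DecidableEq τ]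
    (U : Matrix σ τ ℂ) (V : Matrix τ σ ℂ) (n : ℕ) :
    ((U * V)^(n+1)).trace = ((V * U)^(n+1)).trace := by
  have h : ∀ n, (U * V)^(n+1) = U * (V * U)^n * V := by
    intro n
    induction n with
    | zero => simp
    | succ n ih => rw [pow_succ, ih, pow_succ]; simp only [Matrix.mul_assoc]
  rw [h, Matrix.mul_assoc, Matrix.trace_mul_comm, pow_succ, Matrix.mul_assoc]

lemma trace_two_pow (B : Matrix (Fin 2) (Fin 2) ℂ) (α β : ℂ) (ht : B.trace = α + β)
    (hd : B.det = α * β) (n : ℕ) : (B^n).trace = α^n + β^n := by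
  have hB : B^2 = (α+β) • B - (α*β) • (1 : Matrix (Fin 2) (Fin 2) ℂ) := by
    rw [← ht, ← hd]
    ext i j
    fin_cases i <;> fin_cases j <;>
      simp [pow_two, Matrix.mul_apply, Fin.sum_univ_two, Matrix.trace, Matrix.det_fin_two] <;> ring
  induction n using Nat.twoStepInduction with
  | zero => simp; norm_num
  | one => simp [ht]
  | more n h1 h2 =>
    have : B^(n+2) = (α+β) • B^(n+1) - (α*β) • B^n := by
      rw [pow_add, hB, Matrix.mul_sub, Matrix.mul_smul, Matrix.mul_smul, Matrix.mul_one, pow_succ]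
    rw [this, Matrix.trace_sub, Matrix.trace_smul, Matrix.trace_smul, h1, h2]
    simp only [smul_eq_mul]
    ring

/-- left factor -/
noncomputable def facU (L : ℕ → Fin 2 → ℂ) (i : ℕ) : Matrix (Finset (Fin 2)) (Fin 2) ℂ :=
  fun x b => (∏ j ∈ x, L i j) * (if b = 0 then (if x = ∅ then 1 else 0) else
    (if x = ∅ then 0 else 1))

/-- right factor -/
noncomputable def facV : Matrix (Fin 2) (Finset (Fin 2)) ℂ :=
  fun b y => if b = 0 then 1 else (if y = ∅ then 1 else 0)

lemma colM_fac (L : ℕ → Fin 2 → ℂ) (i : ℕ) : colM L i = facU L i * facV := by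
  ext x y
  simp only [colM, facU, facV, Matrix.mul_apply, Fin.sum_univ_two]
  by_cases hx : x = ∅ <;> by_cases hy : y = ∅ <;> simp [hx, hy]

lemma facVU (L : ℕ → Fin 2 → ℂ) (i : ℕ) :
    facV * facU L i = !![1, (1 + L i 0) * (1 + L i 1) - 1; 1, 0] := by
  have hu : (Finset.univ : Finset (Finset (Fin 2))) = {∅, {0}, {1}, {0,1}} := by decide
  ext a b
  simp only [facU, facV, Matrix.mul_apply, hu]
  rw [Finset.sum_insert (by decide), Finset.sum_insert (by decide), Finset.sum_insert (by decide),
    Finset.sum_singleton]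
  fin_cases a <;> fin_cases b <;> simp <;> ring

lemma Z_eq (n : ℕ) (L : ℕ → Fin 2 → ℂ) (h0 : ∀ i, L (2*i) = L 0) (h1 : ∀ i, L (2*i+1) = L 1)
    (α β μ ν : ℂ) (hμ : μ = (1 + L 0 0) * (1 + L 0 1) - 1)
    (hν : ν = (1 + L 1 0) * (1 + L 1 1) - 1) (hs : α + β = 1 + μ + ν) (hp : α * β = μ * ν) :
    indepPoly (blowCyc2 (2*(n+1))) (fun v => L v.1 v.2) = α^(n+1) + β^(n+1) := by
  have e := indepPoly_eq_trace (2*n+1) (by omega) L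
  have e2 : indepPoly (blowCyc2 (2*(n+1))) (fun v => L v.1 v.2) = (matP (colM L) (2*(n+1))).trace := e
  rw [e2, matP_pow _ (fun i => by ext; simp only [colM, h0]) (fun i => by ext; simp only [colM, h1]),
    colM_fac, colM_fac, Matrix.mul_assoc, trace_pow_swap,
    show facV * (facU L 1 * facV) * facU L 0 = (facV * facU L 1) * (facV * facU L 0) by
      simp only [Matrix.mul_assoc]]
  apply trace_two_pow
  · rw [hs, facVU, facVU, ← hμ, ← hν]
    simp [Matrix.trace, Fin.sum_univ_two]
    ring
  · rw [hp, facVU, facVU, ← hμ, ← hν, Matrix.det_mul]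
    simp [Matrix.det_fin_two]
    ring

end helpers

/-- no open set `S ⊆ ℂ` containing the whole ray `[0,∞)` is a
multivariate zero-free region for the family `{C_{2n}[2K₁] : n ≥ 1}`. -/
theorem stmt13 (S : Set ℂ) (hS : IsOpen S) (hray : ∀ x : ℝ, 0 ≤ x → (x : ℂ) ∈ S) :
    ∃ (n : ℕ) (lam : Fin (2 * n) × Fin 2 → ℂ),
      1 ≤ n ∧ (∀ v, lam v ∈ S) ∧
      indepPoly (blowCyc2 (2 * n)) lam = 0 := by
  have hz : (0 : ℂ) ∈ S := by simpa using hray 0 le_rfl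
  obtain ⟨ε, hε, hball⟩ := Metric.isOpen_iff.1 hS 0 hz
  -- choice of the angle
  have hlim : Filter.Tendsto (fun n : ℕ =>
      Complex.exp (((Real.pi / 2 * (1 / ((n : ℝ) + 1)) : ℝ) : ℂ) * Complex.I) ^ 2 - 1)
      Filter.atTop (nhds 0) := by
    have hc : Continuous (fun x : ℝ =>
      Complex.exp (((Real.pi / 2 * x : ℝ) : ℂ) * Complex.I) ^ 2 - 1) := by fun_prop
    have := (hc.tendsto 0).comp tendsto_one_div_add_atTop_nhds_zero_nat
    refine (this.congr fun n => rfl).trans ?_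
    simp
  obtain ⟨n, hn⟩ := ((Metric.tendsto_nhds.1 hlim) (ε/2) (by positivity)).exists
  rw [dist_zero_right] at hn
  set φ : ℝ := Real.pi / 2 * (1 / ((n : ℝ) + 1)) with hφ
  have hnp : (0:ℝ) < (n:ℝ) + 1 := by positivity
  have hφ0 : 0 < φ := by positivity
  have hφ1 : φ < Real.pi := by
    have : (1 / ((n : ℝ) + 1)) ≤ 1 := by
      rw [div_le_one hnp]; linarith [(Nat.cast_nonneg n : (0:ℝ) ≤ n)]
    nlinarith [Real.pi_pos]
  have hsin : 0 < Real.sin φ := Real.sin_pos_of_pos_of_lt_pi hφ0 hφ1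
  have hsin1 : Real.sin φ ≤ 1 := Real.sin_le_one φ
  set s : ℝ := min (3/8) (ε/8) with hs
  have hs0 : 0 < s := by positivity
  have hs1 : s ≤ 3/8 := min_le_left _ _
  have hs2 : s ≤ ε/8 := min_le_right _ _
  set q : ℝ := (1 - s^2) / (2 * s * Real.sin φ) with hq
  have hden : 0 < 2 * s * Real.sin φ := by positivity
  have hq1 : 1 ≤ q := by
    rw [hq, one_le_div hden]
    nlinarith
  have hq0 : 0 < q := by linarith
  have hqs : 2 * s * q * Real.sin φ + s^2 = 1 := by
    rw [hq]; field_simp; ring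
  clear_value q s
  set z : ℂ := Complex.exp ((φ : ℂ) * Complex.I) with hzdef
  set w : ℂ := Complex.exp (-((φ : ℂ) * Complex.I)) with hwdef
  have hzw : z * w = 1 := by rw [hzdef, hwdef, ← Complex.exp_add]; simp
  have hzsub : z - w = 2 * Complex.I * (Real.sin φ : ℂ) := by
    rw [hzdef, hwdef, ← neg_mul, Complex.exp_mul_I, Complex.exp_mul_I]
    simp only [Complex.cos_neg, Complex.sin_neg, Complex.ofReal_sin]; ring
  have hzn : z^(n+1) = Complex.I := by
    rw [hzdef, ← Complex.exp_nat_mul]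
    have : ((n+1 : ℕ) : ℂ) * ((φ : ℂ) * Complex.I) = Real.pi / 2 * Complex.I := by
      have h : ((n:ℝ)+1) * φ = Real.pi / 2 := by rw [hφ]; field_simp
      rw [← mul_assoc]
      congr 1
      have h' := congrArg (fun x : ℝ => (x : ℂ)) h
      push_cast at h' ⊢
      exact h'
    rw [this, Complex.exp_pi_div_two_mul_I]
  have hwn : w^(n+1) = -Complex.I := by
    have : z^(n+1) * w^(n+1) = 1 := by rw [← mul_pow, hzw, one_pow]
    rw [hzn] at this
    linear_combination (-Complex.I) * this - w^(n+1) * (-1) * Complex.I_sq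
  have hnz : ‖z‖ = 1 := Complex.norm_exp_ofReal_mul_I φ
  have hnw : ‖w‖ = 1 := by
    have := congrArg norm hzw
    simpa [hnz] using this
  have hqC : (q : ℂ) ≠ 0 := by exact_mod_cast hq0.ne'
  have hqsC : 2 * (s:ℂ) * q * (Real.sin φ : ℂ) + (s:ℂ)^2 = 1 := by exact_mod_cast hqs
  set b : ℂ := z^2 - 1 + Complex.I * s * (z + w) / q with hb
  have hbS : b ∈ S := by
    apply hball
    rw [mem_ball_zero_iff]
    have h1 : ‖Complex.I * s * (z + w) / q‖ ≤ 2 * s := by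
      rw [norm_div, norm_mul, norm_mul, Complex.norm_I, Complex.norm_real, Complex.norm_real,
        Real.norm_of_nonneg hs0.le, Real.norm_of_nonneg hq0.le, div_le_iff₀ hq0]
      have : ‖z + w‖ ≤ 2 := (norm_add_le _ _).trans (by rw [hnz, hnw]; norm_num)
      nlinarith
    calc ‖b‖ ≤ ‖z^2 - 1‖ + ‖Complex.I * s * (z + w) / q‖ := norm_add_le _ _
      _ < ε := by linarith
  let L : ℕ → Fin 2 → ℂ := fun i j =>
    if i % 2 = 0 then (if j = 0 then ((q^2 - 1 : ℝ) : ℂ) else b)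
      else (if j = 0 then ((q^2 : ℝ) : ℂ) else ((0 : ℝ) : ℂ))
  have hLS : ∀ i j, L i j ∈ S := by
    intro i j
    simp only [L]
    split_ifs
    · exact hray _ (by nlinarith)
    · exact hbS
    · exact hray _ (by positivity)
    · exact hray _ le_rfl
  set p : ℂ := z * q + Complex.I * s with hp
  refine ⟨n+1, fun v => L v.1 v.2, by omega, fun v => hLS _ _, ?_⟩
  rw [Z_eq n L (fun i => by simp [L]) (fun i => by simp [L, Nat.add_mod])
    (z * (p * q)) (w * (p * q)) (p^2) (q^2)]
  · rw [mul_pow z, mul_pow w, hzn, hwn]; ring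
  · have hbq : (q:ℂ)^2 * (1 + b) = q^2 * z^2 + Complex.I * s * q * (z + w) := by
      rw [hb]; field_simp; ring
    simp only [L]
    norm_num
    rw [hbq, hp]
    linear_combination (s:ℂ)^2 * Complex.I_sq + Complex.I * s * q * hzsub - hqsC + 2 * s * q * (Real.sin φ : ℂ) * Complex.I_sq
  · simp [L]
  · rw [hp]
    linear_combination (q:ℂ)^2 * hzw - (s:ℂ)^2 * Complex.I_sq - Complex.I * s * q * hzsub + hqsC - 2 * s * q * (Real.sin φ : ℂ) * Complex.I_sq
  · linear_combination (p * q)^2 * hzw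
end
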